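/- arXiv:2603.25957 — 3 statements merged into one kernel-verified Lean document; each statement's English description precedes it below -/
import Mathlib

section
/- Fix γ ∈ (1,2), Φ_ℓ, Φ_r ∈ ℝ and an integer n ≥ 2. Let Φ_ss^n be the unique solution of the discrete stationary equation and μ_ss^n the associated Gaussian product measure. Then μ_ss^n is infinitesimally invariant for the boundary-driven long-range Ginzburg–Landau generator: for every smooth compactly supported f : ℝ^{Λ_n} → ℝ, ∫ 𝓛_n f dμ_ss^n = 0. -/
open MeasureTheory Filter ENNReal NNReal

noncomputable section

/-- The normalizing constant `c_γ = (∑_{z∈ℤ, z≠0} |z|^{-(1+γ)})⁻¹`. -/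
def cGamma (γ : ℝ) : ℝ := (∑' z : ℤ, if z = 0 then (0:ℝ) else |(z : ℝ)| ^ (-(1 + γ)))⁻¹

/-- The long-range kernel `p(z) = c_γ |z|^{-(1+γ)}` for `z ≠ 0`, `p(0) = 0`. -/
def pker (γ : ℝ) (z : ℝ) : ℝ := if z = 0 then 0 else cGamma γ * |z| ^ (-(1 + γ))

/-- The discrete lattice `Λ_n = {1, …, n−1}`. -/
abbrev Lam (n : ℕ) : Finset ℕ := Finset.Icc 1 (n - 1)

/-- The configuration space `ℝ^{Λ_n}`. -/
abbrev Conf (n : ℕ) := (↥(Lam n) → ℝ)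

/-- The partial derivative `∂_{φ(k)} f` (with value `0` for `k ∉ Λ_n`). -/
def pdN (n : ℕ) (k : ℕ) (f : Conf n → ℝ) (φ : Conf n) : ℝ :=
  if h : k ∈ Lam n then deriv (fun a => f (Function.update φ ⟨k, h⟩ a)) (φ ⟨k, h⟩) else 0

/-- The coordinate `φ(k)` (with value `0` for `k ∉ Λ_n`). -/
def coordN (n : ℕ) (k : ℕ) (φ : Conf n) : ℝ := if h : k ∈ Lam n then φ ⟨k, h⟩ else 0

/-- The bulk part of the Ginzburg–Landau generator. -/
def GLbulk (γ : ℝ) (n : ℕ) (f : Conf n → ℝ) (φ : Conf n) : ℝ :=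
  (1/2) * ∑ x ∈ Lam n, ∑ y ∈ Lam n, pker γ ((y : ℝ) - (x : ℝ)) *
    ((coordN n x φ - coordN n y φ) * (pdN n y f φ - pdN n x f φ)
      + (pdN n y (pdN n y f) φ - pdN n y (pdN n x f) φ
          - pdN n x (pdN n y f) φ + pdN n x (pdN n x f) φ))

/-- The left boundary part of the Ginzburg–Landau generator. -/
def GLleft (Φl : ℝ) (n : ℕ) (f : Conf n → ℝ) (φ : Conf n) : ℝ :=
  pdN n 1 (pdN n 1 f) φ + (Φl - coordN n 1 φ) * pdN n 1 f φ

/-- The right boundary part of the Ginzburg–Landau generator. -/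
def GLright (Φr : ℝ) (n : ℕ) (f : Conf n → ℝ) (φ : Conf n) : ℝ :=
  pdN n (n - 1) (pdN n (n - 1) f) φ + (Φr - coordN n (n - 1) φ) * pdN n (n - 1) f φ

/-- The boundary-driven long-range Ginzburg–Landau generator
`𝓛_n = n^γ (𝓛^ℓ + 𝓛^r + 𝓛^{bulk})`. -/
def GLgen (γ Φl Φr : ℝ) (n : ℕ) (f : Conf n → ℝ) (φ : Conf n) : ℝ :=
  (n : ℝ) ^ γ * (GLleft Φl n f φ + GLright Φr n f φ + GLbulk γ n f φ)

/-- The Gaussian product measure on `ℝ^{Λ_n}` with unit variances and mean `m x` at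
coordinate `x`. -/
def gaussianProduct (n : ℕ) (m : ℕ → ℝ) : Measure (Conf n) :=
  Measure.pi fun x => ProbabilityTheory.gaussianReal (m (x : ℕ)) 1

/-- The discrete stationary equation for the profile `ψ` on `Λ_n = {1, …, n−1}`. -/
def IsDiscreteProfile (γ Φl Φr : ℝ) (n : ℕ) (ψ : ℕ → ℝ) : Prop :=
  ∀ x ∈ Lam n,
    (∑ y ∈ Lam n, pker γ ((y : ℝ) - (x : ℝ)) * (ψ y - ψ x))
      + (if x = 1 then Φl - ψ 1 else 0) + (if x = n - 1 then Φr - ψ (n - 1) else 0) = 0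

lemma aux_pi_density {ι : Type*} [Fintype ι] (m : ι → ℝ) :
    (Measure.pi fun i => ProbabilityTheory.gaussianReal (m i) 1) =
      (volume : Measure (ι → ℝ)).withDensity
        (fun φ => ENNReal.ofReal (∏ i, ProbabilityTheory.gaussianPDFReal (m i) 1 (φ i))) := by
  refine Measure.pi_eq fun s hs => ?_
  rw [withDensity_apply _ (MeasurableSet.univ_pi hs), volume_pi, Measure.restrict_pi_pi,
    ← ofReal_integral_eq_lintegral_ofReal]
  · rw [integral_fintype_prod_eq_prod (𝕜 := ℝ)
      (fun i x => ProbabilityTheory.gaussianPDFReal (m i) 1 x),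
      ENNReal.ofReal_prod_of_nonneg]
    · refine Finset.prod_congr rfl fun i _ => ?_
      rw [ProbabilityTheory.gaussianReal_apply_eq_integral _ one_ne_zero]
    · intro i _
      exact integral_nonneg fun x => ProbabilityTheory.gaussianPDFReal_nonneg _ _ _
  · exact Integrable.fintype_prod (𝕜 := ℝ)
      (f := fun i x => ProbabilityTheory.gaussianPDFReal (m i) 1 x)
      fun i => (ProbabilityTheory.integrable_gaussianPDFReal _ _).restrict
  · exact ae_of_all _ fun φ => Finset.prod_nonneg fun i _ =>
      ProbabilityTheory.gaussianPDFReal_nonneg _ _ _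

lemma aux_prod_eq {ι : Type*} [Fintype ι] (m : ι → ℝ) :
    (fun φ : ι → ℝ => ∏ i, ProbabilityTheory.gaussianPDFReal (m i) 1 (φ i)) =
      fun φ => (∏ _i : ι, (√(2 * Real.pi * ((1 : ℝ≥0) : ℝ)))⁻¹) *
        Real.exp (∑ i, (-(φ i - m i) ^ 2 / 2)) := by
  funext φ
  simp only [ProbabilityTheory.gaussianPDFReal_def, Finset.prod_mul_distrib, Real.exp_sum]
  simp

lemma aux_density_deriv {ι : Type*} [Fintype ι] [DecidableEq ι] (m : ι → ℝ) (φ : ι → ℝ) (i : ι) :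
    fderiv ℝ (fun φ : ι → ℝ => ∏ i, ProbabilityTheory.gaussianPDFReal (m i) 1 (φ i)) φ
      (Pi.single i 1) = -((φ i - m i) *
        ∏ i, ProbabilityTheory.gaussianPDFReal (m i) 1 (φ i)) := by
  have e := congrFun (aux_prod_eq m) φ
  rw [e, aux_prod_eq]
  have h1 : ∀ j : ι, HasFDerivAt (fun φ : ι → ℝ => -(φ j - m j) ^ 2 / 2)
      (-(φ j - m j) • (ContinuousLinearMap.proj j : (ι → ℝ) →L[ℝ] ℝ)) φ := by
    intro j
    have h0 : HasFDerivAt (fun φ : ι → ℝ => φ j)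
      (ContinuousLinearMap.proj j : (ι → ℝ) →L[ℝ] ℝ) φ := hasFDerivAt_apply j φ
    have h2 : HasDerivAt (fun t : ℝ => -(t - m j) ^ 2 / 2) (-(φ j - m j)) (φ j) := by
      have := ((((hasDerivAt_id (φ j)).sub_const (m j)).pow 2).neg).div_const 2
      refine this.congr_deriv ?_
      simp
      ring
    exact h2.comp_hasFDerivAt φ h0
  have h3 := (((HasFDerivAt.fun_sum (u := Finset.univ) fun j _ => h1 j).exp).const_mul
    (∏ _i : ι, (√(2 * Real.pi * ((1 : ℝ≥0) : ℝ)))⁻¹))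
  rw [h3.fderiv]
  simp [Pi.single_apply]
  ring

lemma aux_density_contDiff {ι : Type*} [Fintype ι] (m : ι → ℝ) :
    ContDiff ℝ (⊤ : ℕ∞)
      (fun φ : ι → ℝ => ∏ i, ProbabilityTheory.gaussianPDFReal (m i) 1 (φ i)) := by
  rw [aux_prod_eq]
  fun_prop

lemma aux_integral {ι : Type*} [Fintype ι] (m : ι → ℝ) (g : (ι → ℝ) → ℝ) :
    ∫ φ, g φ ∂(Measure.pi fun i => ProbabilityTheory.gaussianReal (m i) 1) =
      ∫ φ, (∏ i, ProbabilityTheory.gaussianPDFReal (m i) 1 (φ i)) * g φ := by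
  rw [aux_pi_density, integral_withDensity_eq_integral_toReal_smul]
  · refine integral_congr_ae (ae_of_all _ fun φ => ?_)
    simp only [smul_eq_mul]
    rw [ENNReal.toReal_ofReal]
    exact Finset.prod_nonneg fun i _ => ProbabilityTheory.gaussianPDFReal_nonneg _ _ _
  · exact ((aux_density_contDiff m).continuous.measurable).ennreal_ofReal
  · exact ae_of_all _ fun φ => ENNReal.ofReal_lt_top

/-- Gaussian integration by parts. -/
lemma aux_ibp {ι : Type*} [Fintype ι] [DecidableEq ι] (m : ι → ℝ) (g : (ι → ℝ) → ℝ)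
    (hg : ContDiff ℝ (⊤ : ℕ∞) g) (hs : HasCompactSupport g) (i : ι) :
    ∫ φ, (φ i - m i) * g φ ∂(Measure.pi fun i => ProbabilityTheory.gaussianReal (m i) 1) =
      ∫ φ, fderiv ℝ g φ (Pi.single i 1)
        ∂(Measure.pi fun i => ProbabilityTheory.gaussianReal (m i) 1) := by
  rw [aux_integral, aux_integral]
  have hD := aux_density_contDiff m
  have hDc := hD.continuous
  have hg' : Continuous fun φ => fderiv ℝ g φ (Pi.single i 1) :=
    (hg.continuous_fderiv (by simp)).clm_apply continuous_const
  have hD' : Continuous fun φ => fderiv ℝ (fun φ : ι → ℝ =>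
      ∏ i, ProbabilityTheory.gaussianPDFReal (m i) 1 (φ i)) φ (Pi.single i 1) :=
    (hD.continuous_fderiv (by simp)).clm_apply continuous_const
  rw [integral_mul_fderiv_eq_neg_fderiv_mul_of_integrable]
  · rw [← integral_neg]
    refine integral_congr_ae (ae_of_all _ fun φ => ?_)
    simp only [aux_density_deriv]
    ring
  · exact (hD'.mul hg.continuous).integrable_of_hasCompactSupport hs.mul_left
  · exact (hDc.mul hg').integrable_of_hasCompactSupport
      ((hs.fderiv_apply ℝ (Pi.single i 1)).mul_left)
  · exact (hDc.mul hg.continuous).integrable_of_hasCompactSupport hs.mul_left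
  · exact fun x _ => hD.differentiable (by simp) x
  · exact fun x _ => hg.differentiable (by simp) x

lemma aux_pdN (n k : ℕ) (hk : k ∈ Lam n) (g : Conf n → ℝ) (hg : ContDiff ℝ (⊤ : ℕ∞) g) :
    pdN n k g = fun φ => fderiv ℝ g φ (Pi.single ⟨k, hk⟩ 1) := by
  funext φ
  rw [pdN, dif_pos hk]
  have h1 := hasDerivAt_update φ (⟨k, hk⟩ : ↥(Lam n)) (φ ⟨k, hk⟩)
  have h2 : HasFDerivAt g (fderiv ℝ g φ) (Function.update φ ⟨k, hk⟩ (φ ⟨k, hk⟩)) := by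
    rw [Function.update_eq_self]
    exact (hg.differentiable (by simp) φ).hasFDerivAt
  exact (h2.comp_hasDerivAt _ h1).deriv

lemma aux_pdN_contDiff (n k : ℕ) (hk : k ∈ Lam n) (g : Conf n → ℝ)
    (hg : ContDiff ℝ (⊤ : ℕ∞) g) : ContDiff ℝ (⊤ : ℕ∞) (pdN n k g) := by
  rw [aux_pdN n k hk g hg]
  exact (hg.fderiv_right (m := (⊤ : ℕ∞)) (by simp)).clm_apply contDiff_const

lemma aux_pdN_supp (n k : ℕ) (hk : k ∈ Lam n) (g : Conf n → ℝ)
    (hg : ContDiff ℝ (⊤ : ℕ∞) g) (hs : HasCompactSupport g) :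
    HasCompactSupport (pdN n k g) := by
  rw [aux_pdN n k hk g hg]
  exact hs.fderiv_apply ℝ _

instance aux_prob (n : ℕ) (ψ : ℕ → ℝ) : IsProbabilityMeasure (gaussianProduct n ψ) := by
  unfold gaussianProduct
  infer_instance

lemma aux_int (n : ℕ) (ψ : ℕ → ℝ) (g : Conf n → ℝ)
    (hg : ContDiff ℝ (⊤ : ℕ∞) g) (hs : HasCompactSupport g) :
    Integrable g (gaussianProduct n ψ) :=
  hg.continuous.integrable_of_hasCompactSupport hs

lemma aux_int_coord (n k : ℕ) (hk : k ∈ Lam n) (ψ : ℕ → ℝ) (g : Conf n → ℝ)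
    (hg : ContDiff ℝ (⊤ : ℕ∞) g) (hs : HasCompactSupport g) :
    Integrable (fun φ => coordN n k φ * g φ) (gaussianProduct n ψ) := by
  have hc : Continuous (coordN n k) := by
    unfold coordN
    simp only [hk, dif_pos]
    fun_prop
  exact (hc.mul hg.continuous).integrable_of_hasCompactSupport hs.mul_left

lemma aux_coord (n k : ℕ) (hk : k ∈ Lam n) (ψ : ℕ → ℝ) (g : Conf n → ℝ)
    (hg : ContDiff ℝ (⊤ : ℕ∞) g) (hs : HasCompactSupport g) :
    ∫ φ, coordN n k φ * g φ ∂(gaussianProduct n ψ) =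
      ψ k * ∫ φ, g φ ∂(gaussianProduct n ψ) + ∫ φ, pdN n k g φ ∂(gaussianProduct n ψ) := by
  have h := aux_ibp (fun x : ↥(Lam n) => ψ (x : ℕ)) g hg hs ⟨k, hk⟩
  rw [aux_pdN n k hk g hg]
  unfold gaussianProduct at *
  rw [← h, ← integral_const_mul, ← integral_add]
  · refine integral_congr_ae (ae_of_all _ fun φ => ?_)
    simp only [coordN, hk, dif_pos]
    ring
  · exact (aux_int n ψ g hg hs).const_mul _
  · have := (aux_int_coord n k hk ψ g hg hs).sub ((aux_int n ψ g hg hs).const_mul (ψ k))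
    refine this.congr (ae_of_all _ fun φ => ?_)
    simp only [coordN, hk, dif_pos, Pi.sub_apply]
    ring

lemma aux_pker_symm (γ a b : ℝ) : pker γ (a - b) = pker γ (b - a) := by
  unfold pker
  simp only [sub_eq_zero, abs_sub_comm a b, eq_comm (a := a)]

lemma aux_fun_sub {α : Type*} [MeasurableSpace α] {μ : Measure α} {f g : α → ℝ}
    (hf : Integrable f μ) (hg : Integrable g μ) : Integrable (fun x => f x - g x) μ :=
  hf.sub hg

/-- The Gaussian product measure built on the discrete stationary profile
is infinitesimally invariant for the boundary-driven long-range Ginzburg–Landau generator. -/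
theorem NESS_infinitesimally_invariant
    (γ Φl Φr : ℝ) (hγ : γ ∈ Set.Ioo (1:ℝ) 2)
    (n : ℕ) (hn : 2 ≤ n)
    (ψ : ℕ → ℝ) (hψ : IsDiscreteProfile γ Φl Φr n ψ)
    (f : Conf n → ℝ) (hf : ContDiff ℝ (⊤ : ℕ∞) f) (hsupp : HasCompactSupport f) :
    ∫ φ, GLgen γ Φl Φr n f φ ∂(gaussianProduct n ψ) = 0 := by
  have hd : ∀ k ∈ Lam n, ContDiff ℝ (⊤ : ℕ∞) (pdN n k f) := fun k hk => aux_pdN_contDiff n k hk f hf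
  have hds : ∀ k ∈ Lam n, HasCompactSupport (pdN n k f) :=
    fun k hk => aux_pdN_supp n k hk f hf hsupp
  have i1 : ∀ k ∈ Lam n, Integrable (pdN n k f) (gaussianProduct n ψ) :=
    fun k hk => aux_int n ψ _ (hd k hk) (hds k hk)
  have i2 : ∀ k ∈ Lam n, ∀ l ∈ Lam n, Integrable (pdN n l (pdN n k f)) (gaussianProduct n ψ) :=
    fun k hk l hl => aux_int n ψ _ (aux_pdN_contDiff n l hl _ (hd k hk))
      (aux_pdN_supp n l hl _ (hd k hk) (hds k hk))
  have i3 : ∀ k ∈ Lam n, ∀ l ∈ Lam n,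
      Integrable (fun φ => coordN n l φ * pdN n k f φ) (gaussianProduct n ψ) :=
    fun k hk l hl => aux_int_coord n l hl ψ _ (hd k hk) (hds k hk)
  have e3 : ∀ k ∈ Lam n, ∀ l ∈ Lam n, ∫ φ, coordN n l φ * pdN n k f φ ∂(gaussianProduct n ψ) =
      ψ l * ∫ φ, pdN n k f φ ∂(gaussianProduct n ψ)
        + ∫ φ, pdN n l (pdN n k f) φ ∂(gaussianProduct n ψ) :=
    fun k hk l hl => aux_coord n l hl ψ _ (hd k hk) (hds k hk)
  set a : ℕ → ℝ := fun k => ∫ φ, pdN n k f φ ∂(gaussianProduct n ψ) with ha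
  have m1 : 1 ∈ Lam n := by simp [Lam]; omega
  have m2 : n - 1 ∈ Lam n := by simp [Lam]; omega
  -- boundary terms
  have bd : ∀ k ∈ Lam n, ∀ c : ℝ,
      Integrable (fun φ => pdN n k (pdN n k f) φ + (c - coordN n k φ) * pdN n k f φ)
        (gaussianProduct n ψ) ∧
      ∫ φ, (pdN n k (pdN n k f) φ + (c - coordN n k φ) * pdN n k f φ) ∂(gaussianProduct n ψ)
        = (c - ψ k) * a k := by
    intro k hk c
    have e : (fun φ => pdN n k (pdN n k f) φ + (c - coordN n k φ) * pdN n k f φ) =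
        fun φ => pdN n k (pdN n k f) φ + (c * pdN n k f φ - coordN n k φ * pdN n k f φ) := by
      funext φ; ring
    have j1 := (i1 k hk).const_mul c
    have j2 := i3 k hk k hk
    rw [e]
    refine ⟨(i2 k hk k hk).fun_add (aux_fun_sub j1 j2), ?_⟩
    rw [integral_add (i2 k hk k hk) (aux_fun_sub j1 j2), integral_sub j1 j2, integral_const_mul,
      e3 k hk k hk]
    simp only [ha]
    ring
  -- bulk terms
  have bk : ∀ x ∈ Lam n, ∀ y ∈ Lam n,
      Integrable (fun φ => (coordN n x φ - coordN n y φ) * (pdN n y f φ - pdN n x f φ)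
        + (pdN n y (pdN n y f) φ - pdN n y (pdN n x f) φ
          - pdN n x (pdN n y f) φ + pdN n x (pdN n x f) φ)) (gaussianProduct n ψ) ∧
      ∫ φ, ((coordN n x φ - coordN n y φ) * (pdN n y f φ - pdN n x f φ)
        + (pdN n y (pdN n y f) φ - pdN n y (pdN n x f) φ
          - pdN n x (pdN n y f) φ + pdN n x (pdN n x f) φ)) ∂(gaussianProduct n ψ)
        = (ψ x - ψ y) * (a y - a x) := by
    intro x hx y hy
    have e : (fun φ => (coordN n x φ - coordN n y φ) * (pdN n y f φ - pdN n x f φ)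
        + (pdN n y (pdN n y f) φ - pdN n y (pdN n x f) φ
          - pdN n x (pdN n y f) φ + pdN n x (pdN n x f) φ)) =
        fun φ => ((coordN n x φ * pdN n y f φ - coordN n x φ * pdN n x f φ)
          - (coordN n y φ * pdN n y f φ - coordN n y φ * pdN n x f φ))
          + ((pdN n y (pdN n y f) φ - pdN n y (pdN n x f) φ)
          - (pdN n x (pdN n y f) φ - pdN n x (pdN n x f) φ)) := by
      funext φ; ring
    have c1 := aux_fun_sub (i3 y hy x hx) (i3 x hx x hx)
    have c2 := aux_fun_sub (i3 y hy y hy) (i3 x hx y hy)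
    have d1 := aux_fun_sub (i2 y hy y hy) (i2 x hx y hy)
    have d2 := aux_fun_sub (i2 y hy x hx) (i2 x hx x hx)
    rw [e]
    refine ⟨(aux_fun_sub c1 c2).fun_add (aux_fun_sub d1 d2), ?_⟩
    rw [integral_add (aux_fun_sub c1 c2) (aux_fun_sub d1 d2), integral_sub c1 c2, integral_sub d1 d2,
      integral_sub (i3 y hy x hx) (i3 x hx x hx), integral_sub (i3 y hy y hy) (i3 x hx y hy),
      integral_sub (i2 y hy y hy) (i2 x hx y hy), integral_sub (i2 y hy x hx) (i2 x hx x hx),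
      e3 y hy x hx, e3 x hx x hx, e3 y hy y hy, e3 x hx y hy]
    simp only [ha]
    ring
  have hl : Integrable (GLleft Φl n f) (gaussianProduct n ψ) := (bd 1 m1 Φl).1
  have hr : Integrable (GLright Φr n f) (gaussianProduct n ψ) := (bd (n - 1) m2 Φr).1
  have el : ∫ φ, GLleft Φl n f φ ∂(gaussianProduct n ψ) = (Φl - ψ 1) * a 1 := (bd 1 m1 Φl).2
  have er : ∫ φ, GLright Φr n f φ ∂(gaussianProduct n ψ) = (Φr - ψ (n - 1)) * a (n - 1) :=
    (bd (n - 1) m2 Φr).2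
  have hb : Integrable (GLbulk γ n f) (gaussianProduct n ψ) :=
    (integrable_finsetSum _ fun x hx => integrable_finsetSum _ fun y hy =>
      ((bk x hx y hy).1.const_mul _)).const_mul _
  have eb : ∫ φ, GLbulk γ n f φ ∂(gaussianProduct n ψ) =
      (1/2) * ∑ x ∈ Lam n, ∑ y ∈ Lam n, pker γ ((y : ℝ) - (x : ℝ)) *
        ((ψ x - ψ y) * (a y - a x)) := by
    unfold GLbulk
    rw [integral_const_mul, integral_finsetSum _ fun x hx => integrable_finsetSum _ fun y hy =>
      ((bk x hx y hy).1.const_mul _)]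
    congr 1
    refine Finset.sum_congr rfl fun x hx => ?_
    rw [integral_finsetSum _ fun y hy => ((bk x hx y hy).1.const_mul _)]
    refine Finset.sum_congr rfl fun y hy => ?_
    rw [integral_const_mul, (bk x hx y hy).2]
  have sw : ∑ x ∈ Lam n, ∑ y ∈ Lam n, pker γ ((y : ℝ) - (x : ℝ)) * (ψ x - ψ y) * a y =
      ∑ x ∈ Lam n, ∑ y ∈ Lam n, pker γ ((y : ℝ) - (x : ℝ)) * (ψ y - ψ x) * a x := by
    rw [Finset.sum_comm]
    refine Finset.sum_congr rfl fun x _ => Finset.sum_congr rfl fun y _ => ?_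
    rw [aux_pker_symm]
  have eb2 : ∑ x ∈ Lam n, ∑ y ∈ Lam n, pker γ ((y : ℝ) - (x : ℝ)) *
        ((ψ x - ψ y) * (a y - a x)) =
      2 * ∑ x ∈ Lam n, ∑ y ∈ Lam n, pker γ ((y : ℝ) - (x : ℝ)) * (ψ y - ψ x) * a x := by
    rw [two_mul]
    nth_rewrite 1 [← sw]
    rw [← Finset.sum_add_distrib]
    refine Finset.sum_congr rfl fun x _ => ?_
    rw [← Finset.sum_add_distrib]
    refine Finset.sum_congr rfl fun y _ => ?_
    ring
  have key : ∑ x ∈ Lam n, ((∑ y ∈ Lam n, pker γ ((y : ℝ) - (x : ℝ)) * (ψ y - ψ x))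
      + (if x = 1 then Φl - ψ 1 else 0) + (if x = n - 1 then Φr - ψ (n - 1) else 0)) * a x = 0 :=
    Finset.sum_eq_zero fun x hx => by rw [hψ x hx, zero_mul]
  simp only [add_mul, Finset.sum_add_distrib, Finset.sum_mul, ite_mul, zero_mul,
    Finset.sum_ite_eq', m1, m2, if_true] at key
  unfold GLgen
  rw [integral_const_mul, integral_add (hl.fun_add hr) hb, integral_add hl hr, el, er, eb, eb2]
  have : (Φl - ψ 1) * a 1 + (Φr - ψ (n - 1)) * a (n - 1) + 1 / 2 * (2 * ∑ x ∈ Lam n,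
      ∑ y ∈ Lam n, pker γ ((y : ℝ) - (x : ℝ)) * (ψ y - ψ x) * a x) = 0 := by
    linarith
  rw [this, mul_zero]
end
end

section
/- Fix γ ∈ (1,2), Φ_ℓ, Φ_r ∈ ℝ and an integer n ≥ 2. Let Φ_ss^n be the unique solution of the discrete stationary equation and μ_ss^n the associated Gaussian product measure. Then for every smooth compactly supported f : ℝ^{Λ_n} → ℝ, ∫ f (−𝓛_n f) dμ_ss^n = n^γ [ ∫ (∂_{φ(1)} f)² dμ_ss^n + ∫ (∂_{φ(n−1)} f)² dμ_ss^n + (1/2) ∑_{x,y∈Λ_n} p(y−x) ∫ (∂_{φ(y)} f − ∂_{φ(x)} f)² dμ_ss^n ]. -/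
open MeasureTheory Filter ENNReal NNReal

noncomputable section

namespace DFI

open ProbabilityTheory

lemma stein1 (m : ℝ) (u : ℝ → ℝ) (hu : ContDiff ℝ 1 u) (hs : HasCompactSupport u) :
    ∫ a, deriv u a ∂(gaussianReal m 1) = ∫ a, u a * (a - m) ∂(gaussianReal m 1) := by
  rw [integral_gaussianReal_eq_integral_smul one_ne_zero,
    integral_gaussianReal_eq_integral_smul one_ne_zero]
  have hpc : ∀ x, HasDerivAt (gaussianPDFReal m 1) (-(x - m) * gaussianPDFReal m 1 x) x := by
    intro x
    have h1 : HasDerivAt (fun x : ℝ => -(x - m) ^ 2 / 2) (-(x - m)) x := by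
      have h0 : HasDerivAt (fun x : ℝ => x - m) 1 x := (hasDerivAt_id' x).sub_const m
      refine (((h0.fun_pow 2).fun_neg).div_const 2).congr_deriv ?_
      push_cast
      ring
    have h2 := (h1.exp).const_mul ((√(2 * Real.pi))⁻¹)
    have h3 : gaussianPDFReal m 1 = fun x => (√(2 * Real.pi))⁻¹ *
        Real.exp (-(x - m) ^ 2 / 2) := by
      funext x
      simp [gaussianPDFReal]
    rw [h3]
    refine h2.congr_deriv ?_
    ring
  have hcont : Continuous (gaussianPDFReal m 1) :=
    continuous_iff_continuousAt.2 fun x => (hpc x).continuousAt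
  have hdu : Continuous (deriv u) := hu.continuous_deriv le_rfl
  have hi1 : Integrable (fun a => gaussianPDFReal m 1 a • deriv u a) :=
    (hcont.smul hdu).integrable_of_hasCompactSupport hs.deriv.smul_left
  have hcs2 : HasCompactSupport (fun a => u a * (a - m)) := hs.mul_right
  have hi2 : Integrable (fun a => gaussianPDFReal m 1 a • (u a * (a - m))) := by
    apply Continuous.integrable_of_hasCompactSupport
    · exact hcont.smul (hu.continuous.mul (continuous_id.sub continuous_const))
    · exact HasCompactSupport.smul_left (f := gaussianPDFReal m 1) hcs2
  have hi3 : Integrable (fun a => gaussianPDFReal m 1 a * u a) := by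
    apply Continuous.integrable_of_hasCompactSupport
    · exact hcont.mul hu.continuous
    · exact hs.mul_left
  rw [← sub_eq_zero, ← integral_sub hi1 hi2]
  refine integral_eq_zero_of_hasDerivAt_of_integrable (f := fun a => gaussianPDFReal m 1 a * u a)
    (fun x => ?_) (hi1.sub hi2) hi3
  have := (hpc x).mul ((hu.differentiable one_ne_zero x).hasDerivAt)
  refine this.congr_deriv ?_
  simp only [Pi.sub_apply, smul_eq_mul]
  ring

lemma map_update {ι : Type*} [Fintype ι] [DecidableEq ι] (μ : ι → Measure ℝ)
    [∀ i, IsProbabilityMeasure (μ i)] (k : ι) :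
    ((Measure.pi μ).prod (μ k)).map (fun q : (ι → ℝ) × ℝ => Function.update q.1 k q.2)
      = Measure.pi μ := by
  have hm : Measurable (fun q : (ι → ℝ) × ℝ => Function.update q.1 k q.2) := by
    rw [measurable_pi_iff]
    intro i
    by_cases h : i = k
    · subst h
      simpa using measurable_snd
    · simp only [Function.update_of_ne h]
      exact (measurable_pi_apply i).comp measurable_fst
  symm
  apply Measure.pi_eq
  intro s hs
  rw [Measure.map_apply hm (MeasurableSet.univ_pi hs)]
  have : (fun q : (ι → ℝ) × ℝ => Function.update q.1 k q.2) ⁻¹' (Set.univ.pi s)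
      = (Set.univ.pi (Function.update s k Set.univ)) ×ˢ (s k) := by
    ext q
    simp only [Set.mem_preimage, Set.mem_pi, Set.mem_univ, true_imp_iff, Set.mem_prod]
    constructor
    · intro h
      refine ⟨fun i => ?_, by simpa using h k⟩
      by_cases hi : i = k
      · subst hi; simp
      · simpa [hi] using h i
    · rintro ⟨h, h'⟩ i
      by_cases hi : i = k
      · subst hi; simpa using h'
      · simpa [hi] using h i
  rw [this, Measure.prod_prod, Measure.pi_pi,
    ← Finset.mul_prod_erase Finset.univ _ (Finset.mem_univ k),
    ← Finset.mul_prod_erase Finset.univ (fun i => μ i (s i)) (Finset.mem_univ k)]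
  simp only [Function.update_self, measure_univ, one_mul]
  rw [mul_comm]
  congr 1
  apply Finset.prod_congr rfl
  intro i hi
  rw [Function.update_of_ne (Finset.ne_of_mem_erase hi)]

lemma integral_update {ι : Type*} [Fintype ι] [DecidableEq ι] (μ : ι → Measure ℝ)
    [∀ i, IsProbabilityMeasure (μ i)] (k : ι) (g : (ι → ℝ) → ℝ) (hg : Integrable g (Measure.pi μ)) :
    ∫ φ, g φ ∂(Measure.pi μ)
      = ∫ φ, ∫ a, g (Function.update φ k a) ∂(μ k) ∂(Measure.pi μ) := by
  have hm : Measurable (fun q : (ι → ℝ) × ℝ => Function.update q.1 k q.2) := by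
    rw [measurable_pi_iff]
    intro i
    by_cases h : i = k
    · subst h
      simpa using measurable_snd
    · simp only [Function.update_of_ne h]
      exact (measurable_pi_apply i).comp measurable_fst
  have hg' := hg
  rw [← map_update μ k] at hg'
  have h1 := (integrable_map_measure hg'.aestronglyMeasurable hm.aemeasurable).1 hg'
  conv_lhs => rw [← map_update μ k]
  rw [integral_map hm.aemeasurable hg'.aestronglyMeasurable]
  exact integral_prod _ h1

/-- smooth compactly supported functions -/
def Nice {n : ℕ} (g : Conf n → ℝ) : Prop := ContDiff ℝ (⊤ : ℕ∞) g ∧ HasCompactSupport g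

lemma pdN_eq {n k : ℕ} (h : k ∈ Lam n) {g : Conf n → ℝ} (hg : Differentiable ℝ g) :
    pdN n k g = fun φ => fderiv ℝ g φ (Pi.single ⟨k, h⟩ 1) := by
  funext φ
  have h1 := (hasDerivAt_update φ ⟨k, h⟩ (φ ⟨k, h⟩))
  have h2 : HasFDerivAt g (fderiv ℝ g φ) (Function.update φ ⟨k, h⟩ (φ ⟨k, h⟩)) := by
    rw [Function.update_eq_self]; exact (hg φ).hasFDerivAt
  rw [pdN, dif_pos h]
  exact (h2.comp_hasDerivAt _ h1).deriv

lemma Nice.diff {n : ℕ} {g : Conf n → ℝ} (hg : Nice g) : Differentiable ℝ g :=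
  hg.1.differentiable (by simp)

lemma Nice.pdN {n k : ℕ} (h : k ∈ Lam n) {g : Conf n → ℝ} (hg : Nice g) : Nice (pdN n k g) := by
  rw [pdN_eq h hg.diff]
  constructor
  · exact (hg.1.fderiv_right (m := ((⊤ : ℕ∞) : WithTop ℕ∞)) (by simp)).clm_apply contDiff_const
  · exact hg.2.fderiv_apply ℝ _

lemma Nice.mul {n : ℕ} {g u : Conf n → ℝ} (hg : Nice g) (hu : ContDiff ℝ (⊤ : ℕ∞) u) :
    Nice (fun φ => g φ * u φ) := ⟨hg.1.mul hu, hg.2.mul_right⟩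

instance (n : ℕ) (m : ℕ → ℝ) : IsProbabilityMeasure (gaussianProduct n m) := by
  unfold gaussianProduct; infer_instance

lemma Nice.int {n : ℕ} {g : Conf n → ℝ} (hg : Nice g) (m : ℕ → ℝ) :
    Integrable g (gaussianProduct n m) :=
  hg.1.continuous.integrable_of_hasCompactSupport hg.2

lemma coordN_eq {n k : ℕ} (h : k ∈ Lam n) : coordN n k = fun φ => φ ⟨k, h⟩ := by
  funext φ; rw [coordN, dif_pos h]

lemma coordN_smooth {n k : ℕ} (h : k ∈ Lam n) : ContDiff ℝ (⊤ : ℕ∞) (coordN n k) := by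
  rw [coordN_eq h]; exact contDiff_apply ℝ ℝ _

lemma pdN_mul {n k : ℕ} (h : k ∈ Lam n) {g u : Conf n → ℝ} (hg : Nice g) (hu : Nice u)
    (φ : Conf n) : pdN n k (fun φ => g φ * u φ) φ = pdN n k g φ * u φ + g φ * pdN n k u φ := by
  rw [pdN_eq h hg.diff, pdN_eq h hu.diff, pdN_eq h (hg.diff.fun_mul hu.diff)]
  simp only
  rw [fderiv_fun_mul (hg.diff φ) (hu.diff φ)]
  simp
  ring

lemma stein {n k : ℕ} (h : k ∈ Lam n) (m : ℕ → ℝ) {u : Conf n → ℝ} (hu : Nice u) :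
    ∫ φ, pdN n k u φ ∂(gaussianProduct n m)
      = ∫ φ, u φ * (coordN n k φ - m k) ∂(gaussianProduct n m) := by
  have i1 := (hu.pdN h).int m
  have i2 := (hu.mul ((coordN_smooth h).sub (contDiff_const (c := m k)))).int m
  unfold gaussianProduct at *
  rw [integral_update _ ⟨k, h⟩ _ i1, integral_update _ ⟨k, h⟩ _ i2]
  congr 1
  funext φ
  have hup : ContDiff ℝ 1 (fun a : ℝ => Function.update φ ⟨k, h⟩ a) := contDiff_update 1 φ _
  have := stein1 (m k) (fun a => u (Function.update φ ⟨k, h⟩ a))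
    ((hu.1.of_le (by exact_mod_cast le_top)).comp hup) ?_
  · rw [coordN_eq h]
    simp only [Function.update_self]
    rw [← this]
    congr 1
    funext a
    rw [pdN, dif_pos h]
    simp only [Function.update_idem, Function.update_self]
  · refine hu.2.comp_isClosedEmbedding (g := fun a : ℝ => Function.update φ ⟨k, h⟩ a) ?_
    exact Function.LeftInverse.isClosedEmbedding (f := fun v : Conf n => v ⟨k, h⟩)
      (fun a => by simp) (continuous_apply _) hup.continuous

def HI {n : ℕ} (m : ℕ → ℝ) (g : Conf n → ℝ) (a : ℝ) : Prop :=
  Integrable g (gaussianProduct n m) ∧ ∫ φ, g φ ∂(gaussianProduct n m) = a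

lemma HI.add {n : ℕ} {m : ℕ → ℝ} {g u : Conf n → ℝ} {a b : ℝ} (hg : HI m g a) (hu : HI m u b) :
    HI m (fun φ => g φ + u φ) (a + b) :=
  ⟨hg.1.add hu.1, by rw [integral_add hg.1 hu.1, hg.2, hu.2]⟩

lemma HI.sub {n : ℕ} {m : ℕ → ℝ} {g u : Conf n → ℝ} {a b : ℝ} (hg : HI m g a) (hu : HI m u b) :
    HI m (fun φ => g φ - u φ) (a - b) :=
  ⟨hg.1.sub hu.1, by rw [integral_sub hg.1 hu.1, hg.2, hu.2]⟩

lemma HI.smul {n : ℕ} {m : ℕ → ℝ} {g : Conf n → ℝ} {a : ℝ} (c : ℝ) (hg : HI m g a) :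
    HI m (fun φ => c * g φ) (c * a) :=
  ⟨hg.1.const_mul c, by rw [integral_const_mul, hg.2]⟩

lemma HI.sum {n : ℕ} {m : ℕ → ℝ} {s : Finset ℕ} {g : ℕ → Conf n → ℝ} {a : ℕ → ℝ}
    (hg : ∀ i ∈ s, HI m (g i) (a i)) :
    HI m (fun φ => ∑ i ∈ s, g i φ) (∑ i ∈ s, a i) :=
  ⟨integrable_finsetSum _ fun i hi => (hg i hi).1, by
    rw [integral_finsetSum _ fun i hi => (hg i hi).1]
    exact Finset.sum_congr rfl fun i hi => (hg i hi).2⟩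

lemma HI.congr {n : ℕ} {m : ℕ → ℝ} {g u : Conf n → ℝ} {a b : ℝ} (hg : HI m g a)
    (h1 : ∀ φ, u φ = g φ) (h2 : b = a) : HI m u b := by
  obtain rfl : u = g := funext h1
  exact h2 ▸ hg

lemma Nice.HI {n : ℕ} {g : Conf n → ℝ} (hg : Nice g) (m : ℕ → ℝ) :
    HI m g (∫ φ, g φ ∂(gaussianProduct n m)) := ⟨hg.int m, rfl⟩

lemma pker_symm (γ x y : ℝ) : pker γ (y - x) = pker γ (x - y) := by
  unfold pker
  rw [abs_sub_comm]
  simp only [sub_eq_zero, eq_comm]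

section
variable {n : ℕ} (m : ℕ → ℝ) (f : Conf n → ℝ)
def F (k : ℕ) : ℝ := ∫ φ, f φ * pdN n k f φ ∂(gaussianProduct n m)
def B (x y : ℕ) : ℝ := ∫ φ, pdN n x f φ * pdN n y f φ ∂(gaussianProduct n m)
def C (x y : ℕ) : ℝ := ∫ φ, f φ * pdN n y f φ * coordN n x φ ∂(gaussianProduct n m)

variable {m f}
lemma hF (hf : Nice f) {k : ℕ} (hk : k ∈ Lam n) : HI m (fun φ => f φ * pdN n k f φ) (F m f k) :=
  (hf.mul (hf.pdN hk).1).HI m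
lemma hB (hf : Nice f) {x y : ℕ} (hx : x ∈ Lam n) (hy : y ∈ Lam n) :
    HI m (fun φ => pdN n x f φ * pdN n y f φ) (B m f x y) :=
  ((hf.pdN hx).mul (hf.pdN hy).1).HI m
lemma hC (hf : Nice f) {x y : ℕ} (hx : x ∈ Lam n) (hy : y ∈ Lam n) :
    HI m (fun φ => f φ * pdN n y f φ * coordN n x φ) (C m f x y) :=
  ((hf.mul (hf.pdN hy).1).mul (coordN_smooth hx)).HI m
lemma B_symm (x y : ℕ) : B m f x y = B m f y x := by
  unfold B; simp only [mul_comm]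

lemma hA (hf : Nice f) {x y : ℕ} (hx : x ∈ Lam n) (hy : y ∈ Lam n) :
    HI m (fun φ => f φ * pdN n x (pdN n y f) φ) (C m f x y - m x * F m f y - B m f x y) := by
  have hu := hf.mul (hf.pdN hy).1
  have h1 : HI m (pdN n x (fun φ => f φ * pdN n y f φ)) (C m f x y - m x * F m f y) := by
    refine ⟨(hu.pdN hx).int m, ?_⟩
    rw [stein hx m hu]
    refine (((hC hf hx hy).sub ((hF hf hy).smul (m x))).congr (fun φ => ?_) rfl).2
    ring
  refine (h1.sub (hB hf hx hy)).congr (fun φ => ?_) rfl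
  rw [pdN_mul hx hf (hf.pdN hy)]
  ring

lemma sq_int (hf : Nice f) {x y : ℕ} (hx : x ∈ Lam n) (hy : y ∈ Lam n) :
    ∫ φ, (pdN n y f φ - pdN n x f φ) ^ 2 ∂(gaussianProduct n m)
      = B m f y y - 2 * B m f x y + B m f x x := by
  refine ((((hB hf hy hy).sub ((hB hf hx hy).smul 2)).add (hB hf hx hx)).congr
    (fun φ => ?_) rfl).2
  ring

lemma bdry (hf : Nice f) {x : ℕ} (hx : x ∈ Lam n) (Φ : ℝ) :
    HI m (fun φ => f φ * (pdN n x (pdN n x f) φ + (Φ - coordN n x φ) * pdN n x f φ))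
      ((Φ - m x) * F m f x - B m f x x) := by
  refine (((hA hf hx hx).add ((hF hf hx).smul Φ)).sub (hC hf hx hx)).congr (fun φ => ?_) ?_ <;> ring

lemma bulk (hf : Nice f) {x y : ℕ} (hx : x ∈ Lam n) (hy : y ∈ Lam n) :
    HI m (fun φ => f φ * ((coordN n x φ - coordN n y φ) * (pdN n y f φ - pdN n x f φ)
      + (pdN n y (pdN n y f) φ - pdN n y (pdN n x f) φ
          - pdN n x (pdN n y f) φ + pdN n x (pdN n x f) φ)))
      ((m x - m y) * (F m f y - F m f x) - (B m f y y - 2 * B m f x y + B m f x x)) := by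
  refine ((((hC hf hx hy).sub (hC hf hx hx)).sub ((hC hf hy hy).sub (hC hf hy hx))).add
    ((((hA hf hy hy).sub (hA hf hy hx)).sub (hA hf hx hy)).add (hA hf hx hx))).congr
    (fun φ => ?_) ?_
  · ring
  · rw [B_symm y x]; ring

end

end DFI

/-- Explicit computation of the Dirichlet form of the boundary-driven
long-range Ginzburg–Landau generator with respect to its non-equilibrium steady state. -/
theorem dirichlet_form_identity
    (γ Φl Φr : ℝ) (hγ : γ ∈ Set.Ioo (1:ℝ) 2)
    (n : ℕ) (hn : 2 ≤ n)
    (ψ : ℕ → ℝ) (hψ : IsDiscreteProfile γ Φl Φr n ψ)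
    (f : Conf n → ℝ) (hf : ContDiff ℝ (⊤ : ℕ∞) f) (hsupp : HasCompactSupport f) :
    ∫ φ, f φ * (-(GLgen γ Φl Φr n f φ)) ∂(gaussianProduct n ψ)
      = (n : ℝ) ^ γ * ((∫ φ, (pdN n 1 f φ) ^ 2 ∂(gaussianProduct n ψ))
          + (∫ φ, (pdN n (n - 1) f φ) ^ 2 ∂(gaussianProduct n ψ))
          + (1/2) * ∑ x ∈ Lam n, ∑ y ∈ Lam n, pker γ ((y : ℝ) - (x : ℝ)) *
              ∫ φ, (pdN n y f φ - pdN n x f φ) ^ 2 ∂(gaussianProduct n ψ)) := by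
  have hf' : DFI.Nice f := ⟨hf, hsupp⟩
  have h1 : 1 ∈ Lam n := by simp only [Finset.mem_Icc]; omega
  have h2 : n - 1 ∈ Lam n := by simp only [Finset.mem_Icc]; omega
  have hb1 : ∫ φ, (pdN n 1 f φ) ^ 2 ∂(gaussianProduct n ψ) = DFI.B ψ f 1 1 := by
    unfold DFI.B; simp only [sq]
  have hb2 : ∫ φ, (pdN n (n - 1) f φ) ^ 2 ∂(gaussianProduct n ψ)
      = DFI.B ψ f (n - 1) (n - 1) := by
    unfold DFI.B; simp only [sq]
  have hR : ∑ x ∈ Lam n, ∑ y ∈ Lam n, pker γ ((y : ℝ) - (x : ℝ)) *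
              ∫ φ, (pdN n y f φ - pdN n x f φ) ^ 2 ∂(gaussianProduct n ψ)
      = ∑ x ∈ Lam n, ∑ y ∈ Lam n, pker γ ((y : ℝ) - (x : ℝ)) *
          (DFI.B ψ f y y - 2 * DFI.B ψ f x y + DFI.B ψ f x x) :=
    Finset.sum_congr rfl fun x hx => Finset.sum_congr rfl fun y hy => by
      rw [DFI.sq_int hf' hx hy]
  rw [hb1, hb2, hR]
  have hbulk := (DFI.HI.sum (s := Lam n) fun x hx => DFI.HI.sum (s := Lam n) fun y hy =>
    (DFI.bulk (m := ψ) hf' hx hy).smul (pker γ ((y : ℝ) - (x : ℝ)))).smul (1 / 2)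
  have hall := (((DFI.bdry (m := ψ) hf' h1 Φl).add (DFI.bdry (m := ψ) hf' h2 Φr)).add hbulk).smul
    (-(n : ℝ) ^ γ)
  -- the stationary equation kills the first order terms
  have hst : (Φl - ψ 1) * DFI.F ψ f 1 + (Φr - ψ (n - 1)) * DFI.F ψ f (n - 1)
      + (1 / 2) * ∑ x ∈ Lam n, ∑ y ∈ Lam n, pker γ ((y : ℝ) - (x : ℝ)) *
          ((ψ x - ψ y) * (DFI.F ψ f y - DFI.F ψ f x)) = 0 := by
    have e0 : ∑ x ∈ Lam n, DFI.F ψ f x * ((∑ y ∈ Lam n, pker γ ((y : ℝ) - (x : ℝ)) * (ψ y - ψ x))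
      + (if x = 1 then Φl - ψ 1 else 0) + (if x = n - 1 then Φr - ψ (n - 1) else 0)) = 0 :=
      Finset.sum_eq_zero fun x hx => by rw [hψ x hx, mul_zero]
    simp only [mul_add, Finset.sum_add_distrib, mul_ite, mul_zero, Finset.sum_ite_eq',
      if_pos h1, if_pos h2, Finset.mul_sum] at e0
    have e1 : ∑ x ∈ Lam n, ∑ y ∈ Lam n, pker γ ((y : ℝ) - (x : ℝ)) *
          ((ψ x - ψ y) * (DFI.F ψ f y - DFI.F ψ f x))
        = (∑ x ∈ Lam n, ∑ y ∈ Lam n, pker γ ((y : ℝ) - (x : ℝ)) * ((ψ x - ψ y) * DFI.F ψ f y))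
          + ∑ x ∈ Lam n, ∑ y ∈ Lam n, DFI.F ψ f x * (pker γ ((y : ℝ) - (x : ℝ)) * (ψ y - ψ x)) := by
      simp only [← Finset.sum_add_distrib]
      refine Finset.sum_congr rfl fun x _ => Finset.sum_congr rfl fun y _ => ?_
      ring
    have e2 : (∑ x ∈ Lam n, ∑ y ∈ Lam n, pker γ ((y : ℝ) - (x : ℝ)) * ((ψ x - ψ y) * DFI.F ψ f y))
        = ∑ x ∈ Lam n, ∑ y ∈ Lam n, DFI.F ψ f x * (pker γ ((y : ℝ) - (x : ℝ)) * (ψ y - ψ x)) := by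
      rw [Finset.sum_comm]
      refine Finset.sum_congr rfl fun x _ => Finset.sum_congr rfl fun y _ => ?_
      rw [DFI.pker_symm]
      ring
    rw [e1, e2]
    linarith
  refine (hall.congr (fun φ => ?_) ?_).2
  · simp only [GLgen, GLleft, GLright, GLbulk]
    have e : ∀ (T : ℕ → ℕ → ℝ), ∑ x ∈ Lam n, ∑ y ∈ Lam n, pker γ ((y : ℝ) - (x : ℝ)) *
        (f φ * T x y) = f φ * ∑ x ∈ Lam n, ∑ y ∈ Lam n, pker γ ((y : ℝ) - (x : ℝ)) * T x y := by
      intro T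
      simp only [Finset.mul_sum]
      refine Finset.sum_congr rfl fun x _ => Finset.sum_congr rfl fun y _ => ?_
      ring
    rw [e]
    ring
  · simp only [mul_sub (pker γ _) (_ * _) _, Finset.sum_sub_distrib]
    linear_combination (n : ℝ) ^ γ * hst
end
end

section
/- Fix γ ∈ (1,2) and Φ_ℓ, Φ_r ∈ ℝ. There exists a constant C > 0 depending only on γ such that for every integer n ≥ 2 and every smooth compactly supported f : ℝ^{Λ_n} → ℝ, Var_{μ_ss^n}(f) ≤ C n² ∫ f (−𝓛_n f) dμ_ss^n, where Var_{μ_ss^n}(f) = ∫ f² dμ_ss^n − (∫ f dμ_ss^n)². -/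
open MeasureTheory Filter ENNReal NNReal

noncomputable section

open ProbabilityTheory in
lemma gauss_integrable_iff (m : ℝ) (h : ℝ → ℝ) :
    Integrable h (gaussianReal m 1) ↔ Integrable (fun x => gaussianPDFReal m 1 x * h x) := by
  rw [gaussianReal_of_var_ne_zero _ one_ne_zero,
    integrable_withDensity_iff_integrable_smul' (measurable_gaussianPDF _ _)
      (ae_of_all _ fun _ ↦ gaussianPDF_lt_top)]
  simp [toReal_gaussianPDF]

open ProbabilityTheory in
lemma gauss_pdf_deriv (m x : ℝ) :
    HasDerivAt (gaussianPDFReal m 1) (-(x - m) * gaussianPDFReal m 1 x) x := by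
  unfold gaussianPDFReal
  have h : HasDerivAt (fun x : ℝ => -(x - m) ^ 2 / (2 * ((1:ℝ≥0):ℝ))) (-(x - m)) x := by
    have := ((((hasDerivAt_id x).sub_const m).pow 2).neg).div_const (2 * ((1:ℝ≥0):ℝ))
    convert! this using 1
    simp
    ring
  convert! (h.exp.const_mul _) using 1
  ring

open ProbabilityTheory in
lemma gauss_integrable_lin (m : ℝ) : Integrable (fun x : ℝ => x - m) (gaussianReal m 1) := by
  have := (memLp_id_gaussianReal (μ := m) (v := 1) 1).integrable (by simp)
  exact this.sub (integrable_const m)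

open ProbabilityTheory in
/-- One-dimensional Gaussian integration by parts. -/
lemma gauss_ibp (m : ℝ) (h h' : ℝ → ℝ) (hd : ∀ x, HasDerivAt h (h' x) x)
    (hi : Integrable h (gaussianReal m 1)) (hi' : Integrable h' (gaussianReal m 1))
    (hix : Integrable (fun x => (x - m) * h x) (gaussianReal m 1)) :
    ∫ x, (x - m) * h x ∂(gaussianReal m 1) = ∫ x, h' x ∂(gaussianReal m 1) := by
  rw [gauss_integrable_iff] at hi hi' hix
  rw [integral_gaussianReal_eq_integral_smul one_ne_zero,
    integral_gaussianReal_eq_integral_smul one_ne_zero]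
  have := integral_mul_deriv_eq_deriv_mul_of_integrable (u := gaussianPDFReal m 1) (v := h)
    (u' := fun x => -(x - m) * gaussianPDFReal m 1 x) (v' := h')
    (fun x _ => gauss_pdf_deriv m x) (fun x _ => hd x) hi'
    (by convert! hix.neg using 1; ext x; simp; ring) hi
  simp only [smul_eq_mul]
  rw [this, ← integral_neg]
  congr 1; ext x; ring

section pi
variable {ι : Type*} [Fintype ι] [DecidableEq ι]

/-- Product Gaussian. -/
def gP (m : ι → ℝ) : Measure (ι → ℝ) := Measure.pi fun i => ProbabilityTheory.gaussianReal (m i) 1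

instance (m : ι → ℝ) : IsProbabilityMeasure (gP m) := by unfold gP; infer_instance

lemma gP_update (m : ι → ℝ) (i : ι) :
    Measure.map (fun q : (ι → ℝ) × ℝ => Function.update q.1 i q.2)
      ((gP m).prod (ProbabilityTheory.gaussianReal (m i) 1)) = gP m := by
  symm
  have hm : Measurable (fun q : (ι → ℝ) × ℝ => Function.update q.1 i q.2) := by
    fun_prop
  apply Measure.pi_eq
  intro s hs
  rw [Measure.map_apply hm (MeasurableSet.univ_pi hs)]
  have : (fun q : (ι → ℝ) × ℝ => Function.update q.1 i q.2) ⁻¹' (Set.univ.pi s)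
      = (Set.univ.pi (Function.update s i Set.univ)) ×ˢ (s i) := by
    ext ⟨φ, a⟩
    simp only [Set.mem_preimage, Set.mem_pi, Set.mem_univ, true_implies, Set.mem_prod]
    constructor
    · intro h
      refine ⟨fun j => ?_, by simpa using h i⟩
      by_cases hj : j = i
      · subst hj; simp
      · simpa [hj] using h j
    · rintro ⟨h1, h2⟩ j
      by_cases hj : j = i
      · subst hj; simpa using h2
      · simpa [hj] using h1 j
  rw [this, Measure.prod_prod, gP, Measure.pi_pi]
  rw [← Finset.mul_prod_erase _ _ (Finset.mem_univ i),
    ← Finset.mul_prod_erase _ (fun j => ProbabilityTheory.gaussianReal (m j) 1 (s j))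
      (Finset.mem_univ i)]
  simp only [Function.update_self, measure_univ, one_mul]
  rw [mul_comm]
  congr 1
  refine Finset.prod_congr rfl fun j hj => ?_
  rw [Function.update_of_ne (Finset.ne_of_mem_erase hj)]

lemma gP_integral_update (m : ι → ℝ) (i : ι) (F : (ι → ℝ) → ℝ) (hF : Integrable F (gP m)) :
    Integrable (fun q : (ι → ℝ) × ℝ => F (Function.update q.1 i q.2))
      ((gP m).prod (ProbabilityTheory.gaussianReal (m i) 1)) ∧
    ∫ φ, F φ ∂(gP m) =
      ∫ φ, ∫ a, F (Function.update φ i a) ∂(ProbabilityTheory.gaussianReal (m i) 1) ∂(gP m) := by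
  have hm : Measurable (fun q : (ι → ℝ) × ℝ => Function.update q.1 i q.2) := by
    fun_prop
  have hF' := hF
  rw [← gP_update m i] at hF'
  have h1 := hF'.comp_measurable hm
  refine ⟨h1, ?_⟩
  have h2 := integral_prod _ h1
  simp only [Function.comp_apply] at h2
  rw [← h2]
  conv_lhs => rw [← gP_update m i]
  rw [integral_map hm.aemeasurable hF'.1]

lemma gP_coord (m : ι → ℝ) (i : ι) : Integrable (fun φ : ι → ℝ => φ i - m i) (gP m) := by
  unfold gP
  exact integrable_comp_eval (μ := fun i => ProbabilityTheory.gaussianReal (m i) 1) (i := i)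
    (f := fun x : ℝ => x - m i) (gauss_integrable_lin (m i))

lemma gP_ibp (m : ι → ℝ) (i : ι) (h h' : (ι → ℝ) → ℝ) (hc : Continuous h) (hc' : Continuous h')
    (M : ℝ) (hb : ∀ φ, |h φ| ≤ M) (hb' : ∀ φ, |h' φ| ≤ M)
    (hd : ∀ φ, HasDerivAt (fun a => h (Function.update φ i a)) (h' φ) (φ i)) :
    ∫ φ, (φ i - m i) * h φ ∂(gP m) = ∫ φ, h' φ ∂(gP m) := by
  have i1 : Integrable h' (gP m) :=
    Integrable.of_bound hc'.aestronglyMeasurable M (ae_of_all _ hb')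
  have i2 : Integrable (fun φ : ι → ℝ => (φ i - m i) * h φ) (gP m) :=
    (gP_coord m i).mul_bdd (c := M) hc.aestronglyMeasurable (ae_of_all _ hb)
  rw [(gP_integral_update m i _ i1).2, (gP_integral_update m i _ i2).2]
  congr 1; ext φ
  simp only [Function.update_self]
  have cu : Continuous (fun a : ℝ => Function.update φ i a) := by fun_prop
  apply gauss_ibp (m i) (fun a => h (Function.update φ i a)) (fun a => h' (Function.update φ i a))
  · intro a
    have := hd (Function.update φ i a)
    simpa using this
  · exact Integrable.of_bound (hc.comp cu).aestronglyMeasurable M (ae_of_all _ fun _ => hb _)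
  · exact Integrable.of_bound (hc'.comp cu).aestronglyMeasurable M (ae_of_all _ fun _ => hb' _)
  · exact (gauss_integrable_lin (m i)).mul_bdd (c := M) (hc.comp cu).aestronglyMeasurable
      (ae_of_all _ fun _ => hb _)
/-- Partial derivative via the Fréchet derivative. -/
def pD (i : ι) (f : (ι → ℝ) → ℝ) (φ : ι → ℝ) : ℝ := fderiv ℝ f φ (Pi.single i 1)

lemma pD_update (i : ι) (f : (ι → ℝ) → ℝ) (hf : Differentiable ℝ f) (φ : ι → ℝ) :
    HasDerivAt (fun a => f (Function.update φ i a)) (pD i f φ) (φ i) := by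
  have h1 := hasDerivAt_update φ i (φ i)
  have h2 : HasFDerivAt f (fderiv ℝ f φ) (Function.update φ i (φ i)) := by
    simpa using (hf φ).hasFDerivAt
  exact h2.comp_hasDerivAt _ h1

lemma pD_contDiff (i : ι) (f : (ι → ℝ) → ℝ) (hf : ContDiff ℝ (⊤ : ℕ∞) f) :
    ContDiff ℝ (⊤ : ℕ∞) (pD i f) := by
  unfold pD
  exact (hf.fderiv_right (by simp)).clm_apply contDiff_const

lemma pD_compact (i : ι) (f : (ι → ℝ) → ℝ) (hf : HasCompactSupport f) :
    HasCompactSupport (pD i f) := by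
  have := hf.fderiv (𝕜 := ℝ)
  exact this.comp_left (g := fun L : (ι → ℝ) →L[ℝ] ℝ => L (Pi.single i 1)) (by simp)

lemma exists_bd (f : (ι → ℝ) → ℝ) (hf : Continuous f) (hs : HasCompactSupport f) :
    ∃ M, ∀ φ, |f φ| ≤ M := by
  obtain ⟨M, hM⟩ := hf.bounded_above_of_compact_support hs
  exact ⟨M, hM⟩

/-- Rotated configuration. -/
def rot (m : ι → ℝ) (t : ℝ) (q : (ι → ℝ) × (ι → ℝ)) : ι → ℝ :=
  fun i => m i + Real.cos t * (q.1 i - m i) + Real.sin t * (q.2 i - m i)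

lemma rot_cont (m : ι → ℝ) (t : ℝ) : Continuous (rot m t) := by unfold rot; fun_prop

lemma fderiv_eq_sum (f : (ι → ℝ) → ℝ) (φ v : ι → ℝ) : fderiv ℝ f φ v = ∑ i, v i * pD i f φ := by
  unfold pD
  conv_lhs => rw [pi_eq_sum_univ' v]
  simp [map_sum]

lemma rot_deriv (m : ι → ℝ) (f : (ι → ℝ) → ℝ) (hf : Differentiable ℝ f) (q) (t : ℝ) :
    HasDerivAt (fun t => f (rot m t q))
      (∑ i, (-Real.sin t * (q.1 i - m i) + Real.cos t * (q.2 i - m i)) * pD i f (rot m t q)) t := by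
  have h1 : HasDerivAt (fun t => rot m t q)
      (fun i => -Real.sin t * (q.1 i - m i) + Real.cos t * (q.2 i - m i)) t := by
    rw [hasDerivAt_pi]
    intro i
    unfold rot
    have := (((Real.hasDerivAt_cos t).mul_const (q.1 i - m i)).const_add (m i)).add
      ((Real.hasDerivAt_sin t).mul_const (q.2 i - m i))
    exact this
  have := (hf (rot m t q)).hasFDerivAt.comp_hasDerivAt t h1
  rw [fderiv_eq_sum] at this
  exact this

lemma rot_update1 (m : ι → ℝ) (f : (ι → ℝ) → ℝ) (hf : Differentiable ℝ f) (x y) (t : ℝ) (i : ι) :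
    HasDerivAt (fun a => f (rot m t (Function.update x i a, y)))
      (Real.cos t * pD i f (rot m t (x, y))) (x i) := by
  have h1 : HasDerivAt (fun a => rot m t (Function.update x i a, y))
      (Real.cos t • Pi.single i 1) (x i) := by
    rw [hasDerivAt_pi]
    intro j
    unfold rot
    have h0 := (hasDerivAt_pi.1 (hasDerivAt_update x i (x i))) j
    have := ((((h0.sub_const (m j)).const_mul (Real.cos t)).const_add (m j))).add_const
      (Real.sin t * (y j - m j))
    simpa using this
  have h2 : HasFDerivAt f (fderiv ℝ f (rot m t (x, y)))
      (rot m t (Function.update x i (x i), y)) := by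
    simpa using (hf _).hasFDerivAt
  have := h2.comp_hasDerivAt _ h1
  simpa [pD, Function.comp_def] using this

lemma rot_update2 (m : ι → ℝ) (f : (ι → ℝ) → ℝ) (hf : Differentiable ℝ f) (x y) (t : ℝ) (i : ι) :
    HasDerivAt (fun a => f (rot m t (x, Function.update y i a)))
      (Real.sin t * pD i f (rot m t (x, y))) (y i) := by
  have h1 : HasDerivAt (fun a => rot m t (x, Function.update y i a))
      (Real.sin t • Pi.single i 1) (y i) := by
    rw [hasDerivAt_pi]
    intro j
    unfold rot
    have h0 := (hasDerivAt_pi.1 (hasDerivAt_update y i (y i))) j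
    have := (((h0.sub_const (m j)).const_mul (Real.sin t))).const_add
      (m j + Real.cos t * (x j - m j))
    simpa using this
  have h2 : HasFDerivAt f (fderiv ℝ f (rot m t (x, y)))
      (rot m t (x, Function.update y i (y i))) := by
    simpa using (hf _).hasFDerivAt
  have := h2.comp_hasDerivAt _ h1
  simpa [pD, Function.comp_def] using this

lemma rot_key (m : ι → ℝ) (u g : (ι → ℝ) → ℝ) (hu : ContDiff ℝ (⊤ : ℕ∞) u)
    (hg : ContDiff ℝ (⊤ : ℕ∞) g) (hgs : HasCompactSupport g) (M : ℝ) (hM : ∀ φ, |u φ| ≤ M)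
    (hM' : ∀ i φ, |pD i u φ| ≤ M) (t : ℝ) :
    HasDerivAt (fun t => ∫ q, u q.1 * g (rot m t q) ∂((gP m).prod (gP m)))
      (-Real.sin t * ∑ i, ∫ q, pD i u q.1 * pD i g (rot m t q) ∂((gP m).prod (gP m))) t := by
  have hM0 : 0 ≤ M := (abs_nonneg _).trans (hM 0)
  obtain ⟨B, hB⟩ := exists_bd g hg.continuous hgs
  have hB0 : 0 ≤ B := (abs_nonneg _).trans (hB 0)
  have h1 : ∀ i, ∃ B, ∀ φ, |pD i g φ| ≤ B := fun i =>
    exists_bd _ (pD_contDiff i g hg).continuous (pD_compact i g hgs)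
  have h2 : ∀ i, ∃ B, ∀ φ, |pD i (pD i g) φ| ≤ B := fun i =>
    exists_bd _ (pD_contDiff i _ (pD_contDiff i g hg)).continuous
      (pD_compact i _ (pD_compact i g hgs))
  choose B1 hB1 using h1
  choose B2 hB2 using h2
  have hB10 : ∀ i, 0 ≤ B1 i := fun i => (abs_nonneg _).trans (hB1 i 0)
  have hB20 : ∀ i, 0 ≤ B2 i := fun i => (abs_nonneg _).trans (hB2 i 0)
  have cu := hu.continuous
  have cg := hg.continuous
  have cu1 : ∀ i, Continuous (pD i u) := fun i => (pD_contDiff i u hu).continuous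
  have cg1 : ∀ i, Continuous (pD i g) := fun i => (pD_contDiff i g hg).continuous
  have cg2 : ∀ i, Continuous (pD i (pD i g)) := fun i =>
    (pD_contDiff i _ (pD_contDiff i g hg)).continuous
  have cr := rot_cont m
  have iX : ∀ i, Integrable (fun q : (ι → ℝ) × (ι → ℝ) => q.1 i - m i) ((gP m).prod (gP m)) :=
    fun i => (gP_coord m i).comp_fst (gP m)
  have iY : ∀ i, Integrable (fun q : (ι → ℝ) × (ι → ℝ) => q.2 i - m i) ((gP m).prod (gP m)) :=
    fun i => (gP_coord m i).comp_snd (gP m)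
  -- bounded integrands
  have bug1 : ∀ t i q, |u q.1 * pD i g (rot m t q)| ≤ M * B1 i := fun t i q => by
    rw [abs_mul]; exact mul_le_mul (hM _) (hB1 _ _) (abs_nonneg _) hM0
  have bu1g1 : ∀ t i q, |pD i u q.1 * pD i g (rot m t q)| ≤ M * B1 i := fun t i q => by
    rw [abs_mul]; exact mul_le_mul (hM' _ _) (hB1 _ _) (abs_nonneg _) hM0
  have bug2 : ∀ t i q, |u q.1 * pD i (pD i g) (rot m t q)| ≤ M * B2 i := fun t i q => by
    rw [abs_mul]; exact mul_le_mul (hM _) (hB2 _ _) (abs_nonneg _) hM0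
  have cug1 : ∀ t i, Continuous (fun q : (ι → ℝ) × (ι → ℝ) => u q.1 * pD i g (rot m t q)) :=
    fun t i => (cu.comp continuous_fst).mul ((cg1 i).comp (cr t))
  have cu1g1 : ∀ t i, Continuous (fun q : (ι → ℝ) × (ι → ℝ) => pD i u q.1 * pD i g (rot m t q)) :=
    fun t i => ((cu1 i).comp continuous_fst).mul ((cg1 i).comp (cr t))
  have cug2 : ∀ t i, Continuous
      (fun q : (ι → ℝ) × (ι → ℝ) => u q.1 * pD i (pD i g) (rot m t q)) :=
    fun t i => (cu.comp continuous_fst).mul ((cg2 i).comp (cr t))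
  have iu1g1 : ∀ t i, Integrable (fun q : (ι → ℝ) × (ι → ℝ) => pD i u q.1 * pD i g (rot m t q))
      ((gP m).prod (gP m)) := fun t i =>
    Integrable.of_bound (cu1g1 t i).aestronglyMeasurable _ (ae_of_all _ (bu1g1 t i))
  have iug2 : ∀ t i, Integrable (fun q : (ι → ℝ) × (ι → ℝ) => u q.1 * pD i (pD i g) (rot m t q))
      ((gP m).prod (gP m)) := fun t i =>
    Integrable.of_bound (cug2 t i).aestronglyMeasurable _ (ae_of_all _ (bug2 t i))
  have iXug : ∀ t i, Integrable (fun q : (ι → ℝ) × (ι → ℝ) =>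
      (q.1 i - m i) * (u q.1 * pD i g (rot m t q))) ((gP m).prod (gP m)) := fun t i =>
    (iX i).mul_bdd (c := M * B1 i) (cug1 t i).aestronglyMeasurable (ae_of_all _ (bug1 t i))
  have iYug : ∀ t i, Integrable (fun q : (ι → ℝ) × (ι → ℝ) =>
      (q.2 i - m i) * (u q.1 * pD i g (rot m t q))) ((gP m).prod (gP m)) := fun t i =>
    (iY i).mul_bdd (c := M * B1 i) (cug1 t i).aestronglyMeasurable (ae_of_all _ (bug1 t i))
  -- the derivative
  have hder := (hasDerivAt_integral_of_dominated_loc_of_deriv_le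
    (μ := (gP m).prod (gP m)) (x₀ := t) (s := Set.univ)
    (F := fun t q => u q.1 * g (rot m t q))
    (F' := fun t q => u q.1 *
      ∑ i, (-Real.sin t * (q.1 i - m i) + Real.cos t * (q.2 i - m i)) * pD i g (rot m t q))
    (bound := fun q => ∑ i, (|q.1 i - m i| + |q.2 i - m i|) * (M * B1 i))
    univ_mem
    (Eventually.of_forall fun t =>
      ((cu.comp continuous_fst).mul (cg.comp (cr t))).aestronglyMeasurable)
    (Integrable.of_bound ((cu.comp continuous_fst).mul (cg.comp (cr t))).aestronglyMeasurable
      (M * B) (ae_of_all _ fun q => by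
        rw [Real.norm_eq_abs, abs_mul]; exact mul_le_mul (hM _) (hB _) (abs_nonneg _) hM0))
    (by
      apply Continuous.aestronglyMeasurable
      refine (cu.comp continuous_fst).mul (continuous_finsetSum _ fun i _ => ?_)
      exact Continuous.mul (by fun_prop) ((cg1 i).comp (cr t)))
    (ae_of_all _ fun q s _ => by
      rw [Real.norm_eq_abs, Finset.mul_sum]
      refine (Finset.abs_sum_le_sum_abs _ _).trans (Finset.sum_le_sum fun i _ => ?_)
      have e : u q.1 * ((-Real.sin s * (q.1 i - m i) + Real.cos s * (q.2 i - m i)) *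
          pD i g (rot m s q)) = (-Real.sin s * (q.1 i - m i) + Real.cos s * (q.2 i - m i)) *
          (u q.1 * pD i g (rot m s q)) := by ring
      rw [e, abs_mul]
      refine mul_le_mul ?_ (bug1 s i q) (abs_nonneg _) (by positivity)
      refine (abs_add_le _ _).trans (add_le_add ?_ ?_)
      · rw [abs_mul, abs_neg]
        exact mul_le_of_le_one_left (abs_nonneg _) (Real.abs_sin_le_one s)
      · rw [abs_mul]
        exact mul_le_of_le_one_left (abs_nonneg _) (Real.abs_cos_le_one s))
    (integrable_finset_sum _ fun i _ => ((iX i).abs.add (iY i).abs).mul_const _)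
    (ae_of_all _ fun q s _ => (rot_deriv m g (hg.differentiable (by simp)) q s).const_mul _)).2
  convert! hder using 1
  have e0 : (fun q : (ι → ℝ) × (ι → ℝ) => u q.1 *
      ∑ i, (-Real.sin t * (q.1 i - m i) + Real.cos t * (q.2 i - m i)) * pD i g (rot m t q))
      = fun q => ∑ i, (-Real.sin t * ((q.1 i - m i) * (u q.1 * pD i g (rot m t q)))
        + Real.cos t * ((q.2 i - m i) * (u q.1 * pD i g (rot m t q)))) := by
    ext q
    rw [Finset.mul_sum]
    exact Finset.sum_congr rfl fun i _ => by ring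
  have e1 := integral_finset_sum (μ := (gP m).prod (gP m)) (Finset.univ : Finset ι)
    (f := fun i (q : (ι → ℝ) × (ι → ℝ)) =>
      (-Real.sin t * ((q.1 i - m i) * (u q.1 * pD i g (rot m t q)))
        + Real.cos t * ((q.2 i - m i) * (u q.1 * pD i g (rot m t q)))))
    (fun i _ => ((iXug t i).const_mul _).add ((iYug t i).const_mul _))
  rw [e0, e1, Finset.mul_sum]
  refine Finset.sum_congr rfl fun i _ => ?_
  rw [integral_add ((iXug t i).const_mul _) ((iYug t i).const_mul _), integral_const_mul,
    integral_const_mul]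
  have dg1 : Differentiable ℝ (pD i g) := (pD_contDiff i g hg).differentiable (by simp)
  have eX : ∫ q : (ι → ℝ) × (ι → ℝ), (q.1 i - m i) * (u q.1 * pD i g (rot m t q))
      ∂((gP m).prod (gP m)) = (∫ q, pD i u q.1 * pD i g (rot m t q) ∂((gP m).prod (gP m)))
        + Real.cos t * ∫ q, u q.1 * pD i (pD i g) (rot m t q) ∂((gP m).prod (gP m)) := by
    rw [← integral_const_mul, ← integral_add (iu1g1 t i) ((iug2 t i).const_mul _),
      integral_prod_symm _ (iXug t i),
      integral_prod_symm (fun q : (ι → ℝ) × (ι → ℝ) => pD i u q.1 * pD i g (rot m t q) +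
        Real.cos t * (u q.1 * pD i (pD i g) (rot m t q)))
        ((iu1g1 t i).add ((iug2 t i).const_mul _))]
    congr 1; ext y
    have cy : Continuous (fun x : ι → ℝ => (x, y)) := by fun_prop
    refine gP_ibp m i (fun x => u x * pD i g (rot m t (x, y)))
      (fun x => pD i u x * pD i g (rot m t (x, y)) +
        Real.cos t * (u x * pD i (pD i g) (rot m t (x, y)))) ((cug1 t i).comp cy)
      (((cu1g1 t i).comp cy).add (((cug2 t i).comp cy).const_mul _))
      (M * B1 i + M * B2 i) ?_ ?_ ?_
    · intro x
      exact (bug1 t i (x, y)).trans (le_add_of_nonneg_right (mul_nonneg hM0 (hB20 i)))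
    · intro x
      refine (abs_add_le _ _).trans (add_le_add (bu1g1 t i (x, y)) ?_)
      rw [abs_mul]
      exact (mul_le_of_le_one_left (abs_nonneg _) (Real.abs_cos_le_one t)).trans (bug2 t i (x, y))
    · intro x
      have := (pD_update i u (hu.differentiable (by simp)) x).mul
        (rot_update1 m (pD i g) dg1 x y t i)
      convert! this using 1
      simp
      ring
  have eY : ∫ q : (ι → ℝ) × (ι → ℝ), (q.2 i - m i) * (u q.1 * pD i g (rot m t q))
      ∂((gP m).prod (gP m)) =
        Real.sin t * ∫ q, u q.1 * pD i (pD i g) (rot m t q) ∂((gP m).prod (gP m)) := by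
    rw [← integral_const_mul, integral_prod _ (iYug t i),
      integral_prod _ ((iug2 t i).const_mul _)]
    congr 1; ext x
    have cx : Continuous (fun y : ι → ℝ => (x, y)) := by fun_prop
    refine gP_ibp m i (fun y => u x * pD i g (rot m t (x, y)))
      (fun y => Real.sin t * (u x * pD i (pD i g) (rot m t (x, y)))) ((cug1 t i).comp cx)
      (((cug2 t i).comp cx).const_mul _)
      (M * B1 i + M * B2 i) ?_ ?_ ?_
    · intro y
      exact (bug1 t i (x, y)).trans (le_add_of_nonneg_right (mul_nonneg hM0 (hB20 i)))
    · intro y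
      rw [abs_mul]
      exact ((mul_le_of_le_one_left (abs_nonneg _) (Real.abs_sin_le_one t)).trans
        (bug2 t i (x, y))).trans (le_add_of_nonneg_left (mul_nonneg hM0 (hB10 i)))
    · intro y
      have := (rot_update2 m (pD i g) dg1 x y t i).const_mul (u x)
      convert! this using 1
      ring
  rw [eX, eY]
  ring

lemma rot_zero (m : ι → ℝ) (q) : rot m 0 q = q.1 := by ext i; simp [rot]

lemma rot_pi_div_two (m : ι → ℝ) (q) : rot m (Real.pi / 2) q = q.2 := by ext i; simp [rot]

lemma rot_inv (m : ι → ℝ) (g : (ι → ℝ) → ℝ)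
    (hg : ContDiff ℝ (⊤ : ℕ∞) g) (hgs : HasCompactSupport g) (t : ℝ) :
    ∫ q, g (rot m t q) ∂((gP m).prod (gP m)) = ∫ φ, g φ ∂(gP m) := by
  have z : ∀ i (φ : ι → ℝ), pD i (fun _ : ι → ℝ => (1:ℝ)) φ = 0 := by
    intro i φ; simp [pD]
  have h := rot_key m (fun _ => 1) g contDiff_const hg hgs 1 (by simp) (by simp [z])
  simp only [z, zero_mul, integral_zero, Finset.sum_const_zero, mul_zero, one_mul] at h
  have := is_const_of_deriv_eq_zero (fun t => (h t).differentiableAt) (fun t => (h t).deriv) t 0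
  rw [this]
  simp only [rot_zero]
  rw [integral_fun_fst (μ := gP m) (ν := gP m) g]
  simp

/-- Gaussian Poincaré inequality. -/
lemma gP_poincare (m : ι → ℝ) (f : (ι → ℝ) → ℝ)
    (hf : ContDiff ℝ (⊤ : ℕ∞) f) (hs : HasCompactSupport f) :
    (∫ φ, f φ ^ 2 ∂(gP m)) - (∫ φ, f φ ∂(gP m)) ^ 2 ≤ ∑ i, ∫ φ, pD i f φ ^ 2 ∂(gP m) := by
  set D := ∑ i, ∫ φ, pD i f φ ^ 2 ∂(gP m) with hD
  obtain ⟨B, hB⟩ := exists_bd f hf.continuous hs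
  have h1 : ∀ i, ∃ B, ∀ φ, |pD i f φ| ≤ B := fun i =>
    exists_bd _ (pD_contDiff i f hf).continuous (pD_compact i f hs)
  choose B1 hB1 using h1
  have hB10 : ∀ i, 0 ≤ B1 i := fun i => (abs_nonneg _).trans (hB1 i 0)
  have c1 : ∀ i, Continuous (pD i f) := fun i => (pD_contDiff i f hf).continuous
  have hB0 : 0 ≤ B := (abs_nonneg _).trans (hB 0)
  have key := rot_key m f f hf hf hs (B + ∑ i, B1 i)
    (fun φ => (hB φ).trans (le_add_of_nonneg_right (Finset.sum_nonneg fun i _ => hB10 i)))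
    (fun i φ => ((hB1 i φ).trans (Finset.single_le_sum (f := B1) (fun i _ => hB10 i)
      (Finset.mem_univ i))).trans (le_add_of_nonneg_left hB0))
  have hle : ∀ t, ∑ i, ∫ q, pD i f q.1 * pD i f (rot m t q) ∂((gP m).prod (gP m)) ≤ D := by
    intro t
    refine Finset.sum_le_sum fun i _ => ?_
    have sm : ContDiff ℝ (⊤ : ℕ∞) (fun φ => pD i f φ ^ 2) := (pD_contDiff i f hf).pow 2
    have sc : HasCompactSupport (fun φ => pD i f φ ^ 2) :=
      (pD_compact i f hs).comp_left (g := fun x : ℝ => x ^ 2) (by simp)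
    have j0 : ∫ q, pD i f q.1 ^ 2 ∂((gP m).prod (gP m)) = ∫ φ, pD i f φ ^ 2 ∂(gP m) := by
      simpa [rot_zero] using rot_inv m (fun φ => pD i f φ ^ 2) sm sc 0
    have jt := rot_inv m (fun φ => pD i f φ ^ 2) sm sc t
    have bsq : ∀ φ, |pD i f φ ^ 2| ≤ B1 i ^ 2 := fun φ => by
      rw [abs_pow]; exact pow_le_pow_left₀ (abs_nonneg _) (hB1 i φ) 2
    have i0 : Integrable (fun q : (ι → ℝ) × (ι → ℝ) => pD i f q.1 ^ 2) ((gP m).prod (gP m)) :=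
      Integrable.of_bound (sm.continuous.comp continuous_fst).aestronglyMeasurable _
        (ae_of_all _ fun q => bsq _)
    have it : Integrable (fun q : (ι → ℝ) × (ι → ℝ) => pD i f (rot m t q) ^ 2)
        ((gP m).prod (gP m)) :=
      Integrable.of_bound (sm.continuous.comp (rot_cont m t)).aestronglyMeasurable _
        (ae_of_all _ fun q => bsq _)
    have ip : Integrable (fun q : (ι → ℝ) × (ι → ℝ) => pD i f q.1 * pD i f (rot m t q))
        ((gP m).prod (gP m)) :=
      Integrable.of_bound (((c1 i).comp continuous_fst).mul
        ((c1 i).comp (rot_cont m t))).aestronglyMeasurable (B1 i * B1 i)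
        (ae_of_all _ fun q => by
          rw [Real.norm_eq_abs, abs_mul]
          exact mul_le_mul (hB1 _ _) (hB1 _ _) (abs_nonneg _) (hB10 i))
    have hm := integral_mono ip ((i0.add it).const_mul (1/2)) (fun q => by
      simp only [Pi.add_apply]
      nlinarith [sq_nonneg (pD i f q.1 - pD i f (rot m t q))])
    refine hm.trans ?_
    rw [integral_const_mul]
    simp only [Pi.add_apply]
    rw [integral_add i0 it, j0, jt]
    linarith
  have hG : ∀ t, HasDerivAt (fun t => (∫ q, f q.1 * f (rot m t q) ∂((gP m).prod (gP m)))
      - Real.cos t * D) (-Real.sin t *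
        (∑ i, ∫ q, pD i f q.1 * pD i f (rot m t q) ∂((gP m).prod (gP m))) - -Real.sin t * D) t :=
    fun t => (key t).sub ((Real.hasDerivAt_cos t).mul_const D)
  have mono : MonotoneOn (fun t => (∫ q, f q.1 * f (rot m t q) ∂((gP m).prod (gP m)))
      - Real.cos t * D) (Set.Icc 0 (Real.pi / 2)) := by
    refine monotoneOn_of_deriv_nonneg (convex_Icc _ _)
      (fun t _ => (hG t).continuousAt.continuousWithinAt)
      (fun t _ => (hG t).differentiableAt.differentiableWithinAt) ?_
    intro t ht
    rw [interior_Icc] at ht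
    rw [(hG t).deriv]
    have hsin : 0 ≤ Real.sin t := Real.sin_nonneg_of_nonneg_of_le_pi ht.1.le
      (by linarith [ht.2, Real.pi_pos])
    nlinarith [mul_nonneg hsin (sub_nonneg.2 (hle t))]
  have hp := Real.pi_pos
  have := mono (Set.left_mem_Icc.2 (by positivity)) (Set.right_mem_Icc.2 (by positivity))
    (by positivity)
  simp only [rot_zero, rot_pi_div_two, Real.cos_zero, Real.cos_pi_div_two] at this
  rw [integral_prod_mul (μ := gP m) (ν := gP m) f f,
    integral_fun_fst (μ := gP m) (ν := gP m) (fun φ => f φ * f φ)] at this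
  simp only [probReal_univ, one_smul] at this
  simp only [pow_two] at this ⊢
  linarith
end pi

section dirichlet

lemma pdN_eq (n k : ℕ) (h : k ∈ Lam n) (f : Conf n → ℝ) (hf : Differentiable ℝ f) :
    pdN n k f = pD ⟨k, h⟩ f := by
  ext φ
  unfold pdN
  rw [dif_pos h]
  exact (pD_update _ f hf φ).deriv

lemma pdN_smooth (n k : ℕ) (f : Conf n → ℝ) (hf : ContDiff ℝ (⊤ : ℕ∞) f)
    (hs : HasCompactSupport f) :
    ContDiff ℝ (⊤ : ℕ∞) (pdN n k f) ∧ HasCompactSupport (pdN n k f) := by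
  by_cases h : k ∈ Lam n
  · rw [pdN_eq n k h f (hf.differentiable (by simp))]
    exact ⟨pD_contDiff _ f hf, pD_compact _ f hs⟩
  · have : pdN n k f = fun _ => 0 := by ext φ; unfold pdN; rw [dif_neg h]
    rw [this]
    exact ⟨contDiff_const, HasCompactSupport.zero⟩

/-- The centered operator `∂_x ∂_y f - (φ(x) - ψ(x)) ∂_y f`. -/
def TT (n : ℕ) (ψ : ℕ → ℝ) (f : Conf n → ℝ) (x y : ℕ) (φ : Conf n) : ℝ :=
  pdN n x (pdN n y f) φ - (coordN n x φ - ψ x) * pdN n y f φ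

lemma integrable_cc (n : ℕ) (m : ↥(Lam n) → ℝ) (f : Conf n → ℝ) (hf : Continuous f)
    (hs : HasCompactSupport f) : Integrable f (gP m) := by
  obtain ⟨B, hB⟩ := exists_bd f hf hs
  exact Integrable.of_bound hf.aestronglyMeasurable B (ae_of_all _ hB)

lemma TT_ibp (n : ℕ) (ψ : ℕ → ℝ) (f : Conf n → ℝ) (hf : ContDiff ℝ (⊤ : ℕ∞) f)
    (hs : HasCompactSupport f) (x y : ℕ) (hx : x ∈ Lam n) :
    Integrable (fun φ => f φ * TT n ψ f x y φ) (gP fun k : ↥(Lam n) => ψ k) ∧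
    ∫ φ, f φ * TT n ψ f x y φ ∂(gP fun k : ↥(Lam n) => ψ k)
      = - ∫ φ, pdN n x f φ * pdN n y f φ ∂(gP fun k : ↥(Lam n) => ψ k) := by
  obtain ⟨sx, kx⟩ := pdN_smooth n x f hf hs
  obtain ⟨sy, ky⟩ := pdN_smooth n y f hf hs
  obtain ⟨sxy, kxy⟩ := pdN_smooth n x _ sy ky
  have cf := hf.continuous
  have c1 := sy.continuous
  have c2 := sx.continuous
  have c3 := sxy.continuous
  have hco : ∀ φ : Conf n, coordN n x φ = φ ⟨x, hx⟩ := fun φ => by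
    unfold coordN; rw [dif_pos hx]
  have i1 : Integrable (fun φ => pdN n x f φ * pdN n y f φ) (gP fun k : ↥(Lam n) => ψ k) :=
    integrable_cc n _ _ (c2.mul c1) kx.mul_right
  have i2 : Integrable (fun φ => f φ * pdN n x (pdN n y f) φ) (gP fun k : ↥(Lam n) => ψ k) :=
    integrable_cc n _ _ (cf.mul c3) hs.mul_right
  obtain ⟨A, hA⟩ := exists_bd (fun φ => f φ * pdN n y f φ) (cf.mul c1) hs.mul_right
  have cd' : Continuous (fun φ => pdN n x f φ * pdN n y f φ + f φ * pdN n x (pdN n y f) φ) :=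
    (c2.mul c1).add (cf.mul c3)
  obtain ⟨A', hA'⟩ := exists_bd
    (fun φ => pdN n x f φ * pdN n y f φ + f φ * pdN n x (pdN n y f) φ) cd'
    (kx.mul_right.add hs.mul_right)
  have i3 : Integrable (fun φ : Conf n => (φ ⟨x, hx⟩ - ψ x) * (f φ * pdN n y f φ))
      (gP fun k : ↥(Lam n) => ψ k) :=
    (gP_coord (fun k : ↥(Lam n) => ψ k) ⟨x, hx⟩).mul_bdd (c := A)
      (cf.mul c1).aestronglyMeasurable (ae_of_all _ hA)
  have e : (fun φ => f φ * TT n ψ f x y φ) = fun φ =>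
      f φ * pdN n x (pdN n y f) φ - (φ ⟨x, hx⟩ - ψ x) * (f φ * pdN n y f φ) := by
    ext φ
    unfold TT
    rw [hco]; ring
  have key := gP_ibp (fun k : ↥(Lam n) => ψ k) ⟨x, hx⟩ (fun φ => f φ * pdN n y f φ)
    (fun φ => pdN n x f φ * pdN n y f φ + f φ * pdN n x (pdN n y f) φ) (cf.mul c1) cd'
    (max A A') (fun φ => (hA φ).trans (le_max_left _ _)) (fun φ => (hA' φ).trans (le_max_right _ _))
    (fun φ => by
      have df := hf.differentiable (by simp)
      have dy := sy.differentiable (by simp)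
      have := (pD_update ⟨x, hx⟩ f df φ).mul (pD_update ⟨x, hx⟩ _ dy φ)
      rw [← pdN_eq n x hx f df, ← pdN_eq n x hx _ dy] at this
      convert! this using 1
      simp)
  refine ⟨by rw [e]; exact i2.sub i3, ?_⟩
  rw [e, integral_sub i2 i3, key, integral_add i1 i2]
  ring

lemma GLgen_eq (γ Φl Φr : ℝ) (n : ℕ) (hn : 2 ≤ n) (ψ : ℕ → ℝ)
    (hψ : IsDiscreteProfile γ Φl Φr n ψ) (f : Conf n → ℝ) (φ : Conf n) :
    GLgen γ Φl Φr n f φ = (n : ℝ) ^ γ * (TT n ψ f 1 1 φ + TT n ψ f (n - 1) (n - 1) φ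
      + (1/2) * ∑ x ∈ Lam n, ∑ y ∈ Lam n, pker γ ((y : ℝ) - (x : ℝ)) *
        (TT n ψ f y y φ - TT n ψ f y x φ - TT n ψ f x y φ + TT n ψ f x x φ)) := by
  unfold GLgen
  congr 1
  set d : ℕ → ℝ := fun k => pdN n k f φ with hd
  have psym : ∀ x y : ℕ, pker γ ((y : ℝ) - (x : ℝ)) = pker γ ((x : ℝ) - (y : ℝ)) := by
    intro x y
    unfold pker
    rw [abs_sub_comm]
    simp only [sub_eq_zero, eq_comm]
  have h1 : 1 ∈ Lam n := by simp; omega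
  have hN : n - 1 ∈ Lam n := by simp; omega
  have hsum : ∑ x ∈ Lam n, d x * ((∑ y ∈ Lam n, pker γ ((y : ℝ) - (x : ℝ)) * (ψ y - ψ x))
      + (if x = 1 then Φl - ψ 1 else 0) + (if x = n - 1 then Φr - ψ (n - 1) else 0)) = 0 :=
    Finset.sum_eq_zero fun x hx => by rw [hψ x hx, mul_zero]
  have hsum2 : (∑ x ∈ Lam n, ∑ y ∈ Lam n, pker γ ((y : ℝ) - (x : ℝ)) * (ψ y - ψ x) * d x)
      + (Φl - ψ 1) * d 1 + (Φr - ψ (n - 1)) * d (n - 1) = 0 := by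
    rw [← hsum]
    simp only [mul_add, Finset.sum_add_distrib, mul_ite, mul_zero, Finset.sum_ite_eq', h1, hN,
      if_true]
    rw [mul_comm (d 1), mul_comm (d (n - 1))]
    congr 2
    refine Finset.sum_congr rfl fun x _ => ?_
    rw [Finset.mul_sum]
    exact Finset.sum_congr rfl fun y _ => by ring
  have hswap : ∑ x ∈ Lam n, ∑ y ∈ Lam n, pker γ ((y : ℝ) - (x : ℝ)) * (ψ x - ψ y) * d y
      = ∑ x ∈ Lam n, ∑ y ∈ Lam n, pker γ ((y : ℝ) - (x : ℝ)) * (ψ y - ψ x) * d x := by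
    rw [Finset.sum_comm]
    exact Finset.sum_congr rfl fun x _ => Finset.sum_congr rfl fun y _ => by rw [psym]
  have hb : GLbulk γ n f φ = (1/2) * ∑ x ∈ Lam n, ∑ y ∈ Lam n, pker γ ((y : ℝ) - (x : ℝ)) *
        (TT n ψ f y y φ - TT n ψ f y x φ - TT n ψ f x y φ + TT n ψ f x x φ)
      + (1/2) * (∑ x ∈ Lam n, ∑ y ∈ Lam n, pker γ ((y : ℝ) - (x : ℝ)) * (ψ x - ψ y) * d y
        + ∑ x ∈ Lam n, ∑ y ∈ Lam n, pker γ ((y : ℝ) - (x : ℝ)) * (ψ y - ψ x) * d x) := by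
    unfold GLbulk
    rw [← mul_add]
    simp only [← Finset.sum_add_distrib]
    congr 1
    refine Finset.sum_congr rfl fun x _ => Finset.sum_congr rfl fun y _ => ?_
    simp only [TT, hd]
    ring
  rw [hb, hswap]
  simp only [GLleft, GLright, TT, hd] at hsum2 ⊢
  linarith

lemma dirichlet_eq (γ Φl Φr : ℝ) (n : ℕ) (hn : 2 ≤ n) (ψ : ℕ → ℝ)
    (hψ : IsDiscreteProfile γ Φl Φr n ψ) (f : Conf n → ℝ) (hf : ContDiff ℝ (⊤ : ℕ∞) f)
    (hs : HasCompactSupport f) :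
    ∫ φ, f φ * (-(GLgen γ Φl Φr n f φ)) ∂(gP fun k : ↥(Lam n) => ψ k)
      = (n : ℝ) ^ γ * ∫ φ, (pdN n 1 f φ ^ 2 + pdN n (n - 1) f φ ^ 2
        + (1/2) * ∑ x ∈ Lam n, ∑ y ∈ Lam n, pker γ ((y : ℝ) - (x : ℝ)) *
          (pdN n y f φ - pdN n x f φ) ^ 2) ∂(gP fun k : ↥(Lam n) => ψ k) := by
  set P := gP fun k : ↥(Lam n) => ψ k with hP
  have h1 : 1 ∈ Lam n := by simp; omega
  have hN : n - 1 ∈ Lam n := by simp; omega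
  have iT : ∀ x ∈ Lam n, ∀ y, Integrable (fun φ => f φ * TT n ψ f x y φ) P :=
    fun x hx y => (TT_ibp n ψ f hf hs x y hx).1
  have eT : ∀ x ∈ Lam n, ∀ y, ∫ φ, f φ * TT n ψ f x y φ ∂P
      = - ∫ φ, pdN n x f φ * pdN n y f φ ∂P :=
    fun x hx y => (TT_ibp n ψ f hf hs x y hx).2
  have iD : ∀ x y, Integrable (fun φ => pdN n x f φ * pdN n y f φ) P := fun x y =>
    integrable_cc n _ _ ((pdN_smooth n x f hf hs).1.continuous.mul
      (pdN_smooth n y f hf hs).1.continuous) (pdN_smooth n x f hf hs).2.mul_right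
  -- generic: integrals of the two quadratic expressions
  have gen : ∀ (S : ℕ → ℕ → Conf n → ℝ),
      (∀ x ∈ Lam n, ∀ y ∈ Lam n, Integrable (S x y) P) →
      ∫ φ, (S 1 1 φ + S (n - 1) (n - 1) φ + (1/2) * ∑ x ∈ Lam n, ∑ y ∈ Lam n,
        pker γ ((y : ℝ) - (x : ℝ)) * (S y y φ - S y x φ - S x y φ + S x x φ)) ∂P
      = (∫ φ, S 1 1 φ ∂P) + (∫ φ, S (n - 1) (n - 1) φ ∂P) +
        (1/2) * ∑ x ∈ Lam n, ∑ y ∈ Lam n, pker γ ((y : ℝ) - (x : ℝ)) *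
          ((∫ φ, S y y φ ∂P) - (∫ φ, S y x φ ∂P) - (∫ φ, S x y φ ∂P) + ∫ φ, S x x φ ∂P) := by
    intro S hS
    have j1 : ∀ x ∈ Lam n, ∀ y ∈ Lam n, Integrable (fun φ => pker γ ((y : ℝ) - (x : ℝ)) *
        (S y y φ - S y x φ - S x y φ + S x x φ)) P := fun x hx y hy =>
      ((((hS y hy y hy).sub (hS y hy x hx)).sub (hS x hx y hy)).add (hS x hx x hx)).const_mul _
    have j2 : ∀ x ∈ Lam n, Integrable (fun φ => ∑ y ∈ Lam n, pker γ ((y : ℝ) - (x : ℝ)) *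
        (S y y φ - S y x φ - S x y φ + S x x φ)) P := fun x hx =>
      integrable_finset_sum _ fun y hy => j1 x hx y hy
    have j3 : Integrable (fun φ => ∑ x ∈ Lam n, ∑ y ∈ Lam n, pker γ ((y : ℝ) - (x : ℝ)) *
        (S y y φ - S y x φ - S x y φ + S x x φ)) P :=
      integrable_finset_sum _ fun x hx => j2 x hx
    have k1 := hS 1 h1 1 h1
    have k2 := hS _ hN _ hN
    rw [integral_add (f := fun φ => S 1 1 φ + S (n - 1) (n - 1) φ) (k1.add k2) (j3.const_mul _),
      integral_add k1 k2, integral_const_mul,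
      integral_finset_sum _ j2]
    congr 2
    refine Finset.sum_congr rfl fun x hx => ?_
    rw [integral_finset_sum _ (j1 x hx)]
    refine Finset.sum_congr rfl fun y hy => ?_
    rw [integral_const_mul]
    congr 1
    have l1 : Integrable (fun φ => S y y φ - S y x φ) P := (hS y hy y hy).sub (hS y hy x hx)
    have l2 : Integrable (fun φ => S y y φ - S y x φ - S x y φ) P := l1.sub (hS x hx y hy)
    rw [integral_add l2 (hS x hx x hx), integral_sub l1 (hS x hx y hy),
      integral_sub (hS y hy y hy) (hS y hy x hx)]
  have A := gen (fun x y φ => f φ * TT n ψ f x y φ) (fun x hx y _ => iT x hx y)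
  have Bq := gen (fun x y φ => pdN n x f φ * pdN n y f φ) (fun x _ y _ => iD x y)
  have eL : ∀ φ, f φ * (-(GLgen γ Φl Φr n f φ)) = (n : ℝ) ^ γ * -(f φ * TT n ψ f 1 1 φ +
      f φ * TT n ψ f (n - 1) (n - 1) φ + (1/2) * ∑ x ∈ Lam n, ∑ y ∈ Lam n,
        pker γ ((y : ℝ) - (x : ℝ)) * (f φ * TT n ψ f y y φ - f φ * TT n ψ f y x φ
          - f φ * TT n ψ f x y φ + f φ * TT n ψ f x x φ)) := by
    intro φ
    rw [GLgen_eq γ Φl Φr n hn ψ hψ f φ]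
    have : ∑ x ∈ Lam n, ∑ y ∈ Lam n,
        pker γ ((y : ℝ) - (x : ℝ)) * (f φ * TT n ψ f y y φ - f φ * TT n ψ f y x φ
          - f φ * TT n ψ f x y φ + f φ * TT n ψ f x x φ) =
        f φ * ∑ x ∈ Lam n, ∑ y ∈ Lam n, pker γ ((y : ℝ) - (x : ℝ)) *
        (TT n ψ f y y φ - TT n ψ f y x φ - TT n ψ f x y φ + TT n ψ f x x φ) := by
      simp only [Finset.mul_sum]
      exact Finset.sum_congr rfl fun x _ => Finset.sum_congr rfl fun y _ => by ring
    rw [this]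
    ring
  have eR : ∀ φ, pdN n 1 f φ ^ 2 + pdN n (n - 1) f φ ^ 2
        + (1/2) * ∑ x ∈ Lam n, ∑ y ∈ Lam n, pker γ ((y : ℝ) - (x : ℝ)) *
          (pdN n y f φ - pdN n x f φ) ^ 2
      = pdN n 1 f φ * pdN n 1 f φ + pdN n (n - 1) f φ * pdN n (n - 1) f φ
        + (1/2) * ∑ x ∈ Lam n, ∑ y ∈ Lam n, pker γ ((y : ℝ) - (x : ℝ)) *
          (pdN n y f φ * pdN n y f φ - pdN n y f φ * pdN n x f φ - pdN n x f φ * pdN n y f φ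
            + pdN n x f φ * pdN n x f φ) := by
    intro φ
    rw [pow_two, pow_two]
    congr 2
    exact Finset.sum_congr rfl fun x _ => Finset.sum_congr rfl fun y _ => by ring
  simp only [eL, eR]
  rw [integral_const_mul, integral_neg]
  congr 1
  rw [A, Bq, eT _ h1, eT _ hN]
  have : ∑ x ∈ Lam n, ∑ y ∈ Lam n, pker γ ((y : ℝ) - (x : ℝ)) *
      ((∫ φ, f φ * TT n ψ f y y φ ∂P) - (∫ φ, f φ * TT n ψ f y x φ ∂P)
        - (∫ φ, f φ * TT n ψ f x y φ ∂P) + ∫ φ, f φ * TT n ψ f x x φ ∂P)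
      = - ∑ x ∈ Lam n, ∑ y ∈ Lam n, pker γ ((y : ℝ) - (x : ℝ)) *
        ((∫ φ, pdN n y f φ * pdN n y f φ ∂P) - (∫ φ, pdN n y f φ * pdN n x f φ ∂P)
        - (∫ φ, pdN n x f φ * pdN n y f φ ∂P) + ∫ φ, pdN n x f φ * pdN n x f φ ∂P) := by
    simp only [← Finset.sum_neg_distrib]
    refine Finset.sum_congr rfl fun x hx => Finset.sum_congr rfl fun y hy => ?_
    rw [eT y hy, eT y hy, eT x hx, eT x hx]
    ring
  rw [this]
  ring

lemma cGamma_pos (γ : ℝ) (hγ : γ ∈ Set.Ioo (1:ℝ) 2) : 0 < cGamma γ := by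
  unfold cGamma
  apply inv_pos.2
  have hs : Summable (fun z : ℤ => if z = 0 then (0:ℝ) else |(z : ℝ)| ^ (-(1 + γ))) := by
    refine Summable.of_nonneg_of_le (fun z => ?_) (fun z => ?_)
      (Real.summable_abs_int_rpow (b := 1 + γ) (by linarith [hγ.1]))
    · split_ifs <;> positivity
    · split_ifs
      · positivity
      · exact le_rfl
  refine hs.tsum_pos (fun z => ?_) 1 (by simp)
  split_ifs <;> positivity

lemma pker_nonneg (γ : ℝ) (hγ : γ ∈ Set.Ioo (1:ℝ) 2) (z : ℝ) : 0 ≤ pker γ z := by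
  have := cGamma_pos γ hγ
  unfold pker
  split_ifs <;> positivity

/-- Deterministic spectral estimate. -/
lemma spectral (γ : ℝ) (hγ : γ ∈ Set.Ioo (1:ℝ) 2) (n : ℕ) (hn : 2 ≤ n) (g : ℕ → ℝ) :
    ∑ x ∈ Lam n, g x ^ 2 ≤ (2 + 2 / cGamma γ) * (n : ℝ) ^ 2 * (g 1 ^ 2 + g (n - 1) ^ 2
      + (1/2) * ∑ x ∈ Lam n, ∑ y ∈ Lam n, pker γ ((y : ℝ) - (x : ℝ)) * (g y - g x) ^ 2) := by
  have hc := cGamma_pos γ hγ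
  have hp := pker_nonneg γ hγ
  set E := ∑ k ∈ Finset.Ico 1 (n - 1), (g (k + 1) - g k) ^ 2 with hE
  have hE0 : 0 ≤ E := Finset.sum_nonneg fun _ _ => sq_nonneg _
  have p1 : pker γ 1 = cGamma γ := by simp [pker]
  have p1' : pker γ (-1) = cGamma γ := by simp [pker]
  have hn1 : (1:ℝ) ≤ n := by exact_mod_cast (by omega : 1 ≤ n)
  -- pointwise estimate
  have hx : ∀ x ∈ Lam n, g x ^ 2 ≤ 2 * g 1 ^ 2 + 2 * n * E := by
    intro x hx
    rw [Finset.mem_Icc] at hx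
    have tele : ∑ k ∈ Finset.Ico 1 x, (g (k + 1) - g k) = g x - g 1 :=
      Finset.sum_Ico_sub g hx.1
    have cs := sq_sum_le_card_mul_sum_sq (s := Finset.Ico 1 x) (f := fun k => g (k + 1) - g k)
    rw [tele, Nat.card_Ico] at cs
    have sub : ∑ k ∈ Finset.Ico 1 x, (g (k + 1) - g k) ^ 2 ≤ E :=
      Finset.sum_le_sum_of_subset_of_nonneg (Finset.Ico_subset_Ico le_rfl hx.2)
        fun _ _ _ => sq_nonneg _
    have hcard : ((x - 1 : ℕ) : ℝ) ≤ n := by exact_mod_cast (by omega : x - 1 ≤ n)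
    have : (g x - g 1) ^ 2 ≤ n * E := cs.trans (mul_le_mul hcard sub
      (Finset.sum_nonneg fun _ _ => sq_nonneg _) (by positivity))
    nlinarith [sq_nonneg (g x - 2 * g 1)]
  have hsum : ∑ x ∈ Lam n, g x ^ 2 ≤ n * (2 * g 1 ^ 2 + 2 * n * E) := by
    refine (Finset.sum_le_card_nsmul _ _ _ hx).trans ?_
    rw [nsmul_eq_mul]
    refine mul_le_mul_of_nonneg_right ?_ (by positivity)
    rw [Nat.card_Icc]
    exact_mod_cast (by omega : n - 1 + 1 - 1 ≤ n)
  -- lower bound of the double sum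
  have up : ∀ x y : ℕ, 0 ≤ pker γ ((y : ℝ) - (x : ℝ)) * (g y - g x) ^ 2 := fun x y =>
    mul_nonneg (hp _) (sq_nonneg _)
  have hQ : 2 * (cGamma γ * E) ≤
      ∑ x ∈ Lam n, ∑ y ∈ Lam n, pker γ ((y : ℝ) - (x : ℝ)) * (g y - g x) ^ 2 := by
    rw [← Finset.sum_product']
    set A := (Finset.Ico 1 (n - 1)).image (fun k => (k, k + 1)) with hA
    set B := (Finset.Ico 1 (n - 1)).image (fun k => (k + 1, k)) with hB
    have sA : ∑ q ∈ A, pker γ ((q.2 : ℝ) - (q.1 : ℝ)) * (g q.2 - g q.1) ^ 2 = cGamma γ * E := by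
      rw [hA, Finset.sum_image (by intro a _ b _ h; simpa using h), hE, Finset.mul_sum]
      refine Finset.sum_congr rfl fun k _ => ?_
      simp [p1]
    have sB : ∑ q ∈ B, pker γ ((q.2 : ℝ) - (q.1 : ℝ)) * (g q.2 - g q.1) ^ 2 = cGamma γ * E := by
      rw [hB, Finset.sum_image (by intro a _ b _ h; simpa using h), hE, Finset.mul_sum]
      refine Finset.sum_congr rfl fun k _ => ?_
      simp only [Nat.cast_add, Nat.cast_one, sub_add_cancel_left, p1']
      ring
    have dis : Disjoint A B := by
      rw [Finset.disjoint_left]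
      rintro ⟨a, b⟩ h1 h2
      simp only [hA, hB, Finset.mem_image, Prod.mk.injEq] at h1 h2
      obtain ⟨k, _, h3, h4⟩ := h1
      obtain ⟨l, _, h5, h6⟩ := h2
      omega
    have : 2 * (cGamma γ * E) = ∑ q ∈ A ∪ B,
        pker γ ((q.2 : ℝ) - (q.1 : ℝ)) * (g q.2 - g q.1) ^ 2 := by
      rw [Finset.sum_union dis, sA, sB]; ring
    rw [this]
    refine Finset.sum_le_sum_of_subset_of_nonneg ?_ fun q _ _ => up _ _
    intro q hq
    simp only [hA, hB, Finset.mem_union, Finset.mem_image, Finset.mem_Ico] at hq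
    simp only [Finset.mem_product, Finset.mem_Icc]
    rcases hq with ⟨k, hk, rfl⟩ | ⟨k, hk, rfl⟩ <;> simp <;> omega
  set Q := ∑ x ∈ Lam n, ∑ y ∈ Lam n, pker γ ((y : ℝ) - (x : ℝ)) * (g y - g x) ^ 2 with hQdef
  have hEQ : E ≤ (1 / cGamma γ) * ((1/2) * Q) := by
    rw [div_mul_eq_mul_div, one_mul, le_div_iff₀ hc]; linarith
  have hQ0 : 0 ≤ (1/2) * Q := by
    have := mul_nonneg hc.le hE0
    linarith
  refine hsum.trans ?_
  have s1 : n * (2 * g 1 ^ 2 + 2 * n * E) ≤ (n:ℝ) ^ 2 * (2 * g 1 ^ 2 + 2 * E) := by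
    have := mul_nonneg (sub_nonneg.2 hn1) (sq_nonneg (g 1))
    nlinarith
  refine s1.trans ?_
  have s2 : 2 * g 1 ^ 2 + 2 * E ≤
      (2 + 2 / cGamma γ) * (g 1 ^ 2 + g (n - 1) ^ 2 + (1/2) * Q) := by
    have e : 2 / cGamma γ = 2 * (1 / cGamma γ) := by ring
    have hd : 0 ≤ 1 / cGamma γ := by positivity
    rw [e]
    nlinarith [mul_nonneg hd (sq_nonneg (g 1)), mul_nonneg hd (sq_nonneg (g (n - 1))),
      sq_nonneg (g (n - 1))]
  calc (n:ℝ) ^ 2 * (2 * g 1 ^ 2 + 2 * E) ≤ (n:ℝ) ^ 2 *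
      ((2 + 2 / cGamma γ) * (g 1 ^ 2 + g (n - 1) ^ 2 + (1/2) * Q)) :=
        mul_le_mul_of_nonneg_left s2 (by positivity)
    _ = _ := by ring

end dirichlet

/-- Poincaré inequality for the non-equilibrium steady state: the variance
is bounded by `C n²` times the Dirichlet form of the generator, with `C` depending only
on `γ`. -/
theorem NESS_poincare_inequality
    (γ : ℝ) (hγ : γ ∈ Set.Ioo (1:ℝ) 2) :
    ∃ C : ℝ, 0 < C ∧ ∀ Φl Φr : ℝ, ∀ n : ℕ, 2 ≤ n →
      ∀ ψ : ℕ → ℝ, IsDiscreteProfile γ Φl Φr n ψ →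
      ∀ f : Conf n → ℝ, ContDiff ℝ (⊤ : ℕ∞) f → HasCompactSupport f →
        (∫ φ, (f φ) ^ 2 ∂(gaussianProduct n ψ)) - (∫ φ, f φ ∂(gaussianProduct n ψ)) ^ 2
          ≤ C * (n : ℝ) ^ 2 *
            ∫ φ, f φ * (-(GLgen γ Φl Φr n f φ)) ∂(gaussianProduct n ψ) := by
  have hc := cGamma_pos γ hγ
  refine ⟨2 + 2 / cGamma γ, by positivity, ?_⟩
  intro Φl Φr n hn ψ hψ f hf hs
  have hg : gaussianProduct n ψ = gP (fun k : ↥(Lam n) => ψ k) := rfl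
  rw [hg, dirichlet_eq γ Φl Φr n hn ψ hψ f hf hs]
  refine (gP_poincare (fun k : ↥(Lam n) => ψ k) f hf hs).trans ?_
  set P := gP (fun k : ↥(Lam n) => ψ k) with hP
  have iD : ∀ x y, Integrable (fun φ => pdN n x f φ * pdN n y f φ) P := fun x y =>
    integrable_cc n _ _ ((pdN_smooth n x f hf hs).1.continuous.mul
      (pdN_smooth n y f hf hs).1.continuous) (pdN_smooth n x f hf hs).2.mul_right
  have iS : ∀ x, Integrable (fun φ => pdN n x f φ ^ 2) P := fun x => by
    simpa only [pow_two] using iD x x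
  have e1 : ∑ i : ↥(Lam n), ∫ φ, pD i f φ ^ 2 ∂P
      = ∫ φ, ∑ x ∈ Lam n, pdN n x f φ ^ 2 ∂P := by
    rw [integral_finset_sum _ (fun x _ => iS x),
      ← Finset.sum_coe_sort (Lam n) (fun x => ∫ φ, pdN n x f φ ^ 2 ∂P)]
    refine Finset.sum_congr rfl fun i _ => ?_
    rw [pdN_eq n i i.2 f (hf.differentiable (by simp))]
  have iQ : Integrable (fun φ => pdN n 1 f φ ^ 2 + pdN n (n - 1) f φ ^ 2
        + (1/2) * ∑ x ∈ Lam n, ∑ y ∈ Lam n, pker γ ((y : ℝ) - (x : ℝ)) *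
          (pdN n y f φ - pdN n x f φ) ^ 2) P := by
    refine ((iS 1).add (iS (n - 1))).add (Integrable.const_mul ?_ _)
    refine integrable_finset_sum _ fun x _ => integrable_finset_sum _ fun y _ =>
      Integrable.const_mul ?_ _
    have := ((iS y).sub ((iD y x).const_mul 2)).add (iS x)
    refine this.congr (ae_of_all _ fun φ => ?_)
    simp only [Pi.add_apply, Pi.sub_apply]
    ring
  have nQ : 0 ≤ ∫ φ, (pdN n 1 f φ ^ 2 + pdN n (n - 1) f φ ^ 2
        + (1/2) * ∑ x ∈ Lam n, ∑ y ∈ Lam n, pker γ ((y : ℝ) - (x : ℝ)) *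
          (pdN n y f φ - pdN n x f φ) ^ 2) ∂P := by
    refine integral_nonneg fun φ => ?_
    have : 0 ≤ ∑ x ∈ Lam n, ∑ y ∈ Lam n, pker γ ((y : ℝ) - (x : ℝ)) *
          (pdN n y f φ - pdN n x f φ) ^ 2 :=
      Finset.sum_nonneg fun x _ => Finset.sum_nonneg fun y _ =>
        mul_nonneg (pker_nonneg γ hγ _) (sq_nonneg _)
    simp only [Pi.zero_apply]
    positivity
  rw [e1]
  refine (integral_mono (integrable_finset_sum _ fun x _ => iS x)
    (iQ.const_mul ((2 + 2 / cGamma γ) * (n : ℝ) ^ 2))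
    (fun φ => spectral γ hγ n hn (fun k => pdN n k f φ))).trans ?_
  rw [integral_const_mul]
  refine mul_le_mul_of_nonneg_left ?_ (by positivity)
  have hn1 : (1:ℝ) ≤ n := by exact_mod_cast (by omega : 1 ≤ n)
  exact le_mul_of_one_le_left nQ (Real.one_le_rpow hn1 (by linarith [hγ.1]))
end
end
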